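/- arXiv:1409.5782 — 3 statements merged into one kernel-verified Lean document; each statement's English description precedes it below -/
import Mathlib

section
/- Let K ⊂ ℝ² be an equilateral triangle centered at the origin and let K° = {p : ⟨p,q⟩ ≤ 1 for all q ∈ K} be its polar body. Then ξ_{K°}(K − K) = 3·ξ_{K°}(K); in particular the inequality ξ_T(K−K) ≤ (n+1)ξ_T(K) is sharp in the plane. -/
open scoped RealInnerProductSpace Pointwise
open MeasureTheory

/-- A convex body: compact, convex, with nonempty interior. -/
def IsConvexBody {n : ℕ} (K : Set (EuclideanSpace ℝ (Fin n))) : Prop :=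
  IsCompact K ∧ Convex ℝ K ∧ (interior K).Nonempty

/-- The (possibly non-symmetric) norm with unit ball `T°`: `‖v‖_T = max_{p ∈ T} ⟨p, v⟩`. -/
noncomputable def suppNorm {n : ℕ} (T : Set (EuclideanSpace ℝ (Fin n)))
    (v : EuclideanSpace ℝ (Fin n)) : ℝ :=
  sSup ((fun p => ⟪p, v⟫) '' T)

/-- The vertex set `q 0, …, q (m-1)` cannot be translated into the interior of `K`. -/
def NotTranslatableInto {n : ℕ} (m : ℕ) (q : ℕ → EuclideanSpace ℝ (Fin n))
    (K : Set (EuclideanSpace ℝ (Fin n))) : Prop :=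
  ∀ t : EuclideanSpace ℝ (Fin n), ∃ i < m, q i + t ∉ interior K

/-- `ξ_T(K)`: the length of the shortest closed billiard trajectory in `K` with geometry
given by `T`, characterized à la Bezdek–Bezdek as the infimum of `ℓ_T`-lengths of closed
polygonal lines whose vertex set cannot be translated into the interior of `K`. -/
noncomputable def xi {n : ℕ} (T K : Set (EuclideanSpace ℝ (Fin n))) : ℝ :=
  sInf {ℓ : ℝ | ∃ m : ℕ, 2 ≤ m ∧ ∃ q : ℕ → EuclideanSpace ℝ (Fin n),
    NotTranslatableInto m q K ∧
    ℓ = ∑ i ∈ Finset.range m, suppNorm T (q ((i + 1) % m) - q i)}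

/-- `ξ_B(K)`: the Euclidean version of `xi`. -/
noncomputable def xiB {n : ℕ} (K : Set (EuclideanSpace ℝ (Fin n))) : ℝ :=
  sInf {ℓ : ℝ | ∃ m : ℕ, 2 ≤ m ∧ ∃ q : ℕ → EuclideanSpace ℝ (Fin n),
    NotTranslatableInto m q K ∧
    ℓ = ∑ i ∈ Finset.range m, ‖q ((i + 1) % m) - q i‖}

/-- The Euclidean width of `K`: the minimum over unit directions of the breadth. -/
noncomputable def widthB {n : ℕ} (K : Set (EuclideanSpace ℝ (Fin n))) : ℝ :=
  sInf {w : ℝ | ∃ p : EuclideanSpace ℝ (Fin n), ‖p‖ = 1 ∧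
    w = sSup ((fun q => ⟪p, q⟫) '' K) - sInf ((fun q => ⟪p, q⟫) '' K)}

/-- The polar body `K° = {p : ⟨p, q⟩ ≤ 1 ∀ q ∈ K}`. -/
def polarBody {n : ℕ} (K : Set (EuclideanSpace ℝ (Fin n))) :
    Set (EuclideanSpace ℝ (Fin n)) :=
  {p | ∀ q ∈ K, ⟪p, q⟫ ≤ 1}

/-!
Let `b` be the vertices of a simplex `K ⊆ ℝⁿ` with centroid `0`. Its facet functionals `f i` have
sum zero and satisfy `f i v ≤ ‖v‖`, where `‖v‖ = ‖v‖_{K°}`. Two vertices `u`, `v` of a closed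
polygonal line split it into two arcs, so `‖u - v‖ + ‖v - u‖` is at most its length `ℓ`. Combining
this over pairs of vertices bounds both the range of each `f i` on the line and the sums
`∑ i, f i (u i)` over vertices `u i`, tightly enough that a line with `n ℓ < 2 (n + 1)` can be
translated into the interior of `K ∩ -K`. On the other hand, the line with edges `(2 / n) • b i`
has length at most `2 (n + 1) / n` and cannot be translated into the interior of `K`. Hence
`ξ_{K°}(S) = 2 (n + 1) / n` whenever `K ∩ -K ⊆ S ⊆ K`. For a triangle `K - K = 3 (K ∩ -K)`, and
`ξ` is homogeneous.
-/

section ClosedPolygon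

variable {E : Type*} [AddCommGroup E] {N : E → ℝ}

/-- The `N`-length of the closed polygonal line with vertices `q 0, …, q (m - 1)`. For
`N = suppNorm T` this is `ℓ_T`. -/
def closedLength (N : E → ℝ) (m : ℕ) (q : ℕ → E) : ℝ :=
  ∑ i ∈ Finset.range m, N (q ((i + 1) % m) - q i)

lemma sum_range_closed_edges (m : ℕ) (q : ℕ → E) :
    ∑ i ∈ Finset.range m, (q ((i + 1) % m) - q i) = 0 := by
  cases m with
  | zero => rfl
  | succ n =>
    have hedge : ∀ i ∈ Finset.range n, q ((i + 1) % (n + 1)) - q i = q (i + 1) - q i := by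
      intro i hi
      rw [Nat.mod_eq_of_lt (Nat.succ_lt_succ (Finset.mem_range.1 hi))]
    rw [Finset.sum_range_succ, Finset.sum_congr rfl hedge, Finset.sum_range_sub, Nat.mod_self]
    abel

lemma add_sub_rev_le_closedLength (h0 : N 0 ≤ 0) (hadd : ∀ u v, N (u + v) ≤ N u + N v)
    {m i j : ℕ} (q : ℕ → E) (hi : i < m) (hj : j < m) :
    N (q i - q j) + N (q j - q i) ≤ closedLength N m q := by
  wlog hij : i ≤ j generalizing i j
  · rw [add_comm]
    exact this hj hi (le_of_not_ge hij)
  let d : ℕ → E := fun k => q ((k + 1) % m) - q k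
  have hsub : Finset.Ico i j ⊆ Finset.range m := fun k hk =>
    Finset.mem_range.2 ((Finset.mem_Ico.1 hk).2.trans hj)
  have harc : ∑ k ∈ Finset.Ico i j, d k = q j - q i := by
    rw [← Finset.sum_Ico_sub q hij]
    refine Finset.sum_congr rfl fun k hk => ?_
    have hk' : k + 1 < m := (Nat.succ_le_of_lt (Finset.mem_Ico.1 hk).2).trans_lt hj
    simp only [d, Nat.mod_eq_of_lt hk']
  have hcoarc : ∑ k ∈ Finset.range m \ Finset.Ico i j, d k = q i - q j := by
    rw [← neg_sub, ← harc, eq_neg_iff_add_eq_zero, Finset.sum_sdiff hsub,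
      sum_range_closed_edges]
  calc N (q i - q j) + N (q j - q i)
      ≤ ∑ k ∈ Finset.range m \ Finset.Ico i j, N (d k) + ∑ k ∈ Finset.Ico i j, N (d k) := by
        rw [← harc, ← hcoarc]
        exact add_le_add (Finset.le_sum_of_subadditive N h0 hadd _ d)
          (Finset.le_sum_of_subadditive N h0 hadd _ d)
    _ = closedLength N m q := Finset.sum_sdiff hsub

lemma closedLength_sum_range (N : E → ℝ) {m : ℕ} {w : ℕ → E}
    (hw : ∑ k ∈ Finset.range m, w k = 0) :
    closedLength N m (fun k => ∑ l ∈ Finset.range k, w l) = ∑ k ∈ Finset.range m, N (w k) := by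
  refine Finset.sum_congr rfl fun k hk => congrArg N ?_
  have hmod : ∑ l ∈ Finset.range ((k + 1) % m), w l = ∑ l ∈ Finset.range (k + 1), w l := by
    rcases (Nat.succ_le_of_lt (Finset.mem_range.1 hk)).lt_or_eq with hlt | rfl
    · rw [Nat.mod_eq_of_lt hlt]
    · rw [Nat.mod_self, hw, Finset.sum_range_zero]
  simp only [hmod, Finset.sum_range_succ_sub_sum]

end ClosedPolygon

lemma exists_sum_eq_of_sum_lt_of_lt_sum {ι 𝕜 : Type*} [Fintype ι] [Field 𝕜] [LinearOrder 𝕜]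
    [IsStrictOrderedRing 𝕜] {a b : ι → 𝕜} {c : 𝕜} (hab : ∀ i, a i < b i)
    (ha : ∑ i, a i < c) (hb : c < ∑ i, b i) :
    ∃ x : ι → 𝕜, ∑ i, x i = c ∧ ∀ i, a i < x i ∧ x i < b i := by
  have hD : 0 < ∑ i, b i - ∑ i, a i := sub_pos.2 (ha.trans hb)
  let s := (c - ∑ i, a i) / (∑ i, b i - ∑ i, a i)
  have hs0 : 0 < s := div_pos (sub_pos.2 ha) hD
  have hs1 : s < 1 := (div_lt_one hD).2 (by linarith)
  refine ⟨fun i => a i + s * (b i - a i), ?_, fun i => ?_⟩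
  · rw [Finset.sum_add_distrib, ← Finset.mul_sum, Finset.sum_sub_distrib,
      div_mul_cancel₀ _ hD.ne', add_sub_cancel]
  · have hi := sub_pos.2 (hab i)
    exact ⟨by linarith [mul_pos hs0 hi], by linarith [mul_pos (sub_pos.2 hs1) hi]⟩

section ZeroSumFunctionals

variable {ι E : Type*} [Fintype ι] [AddCommGroup E] [Module ℝ E] {N : E → ℝ}
  {f : ι → E →ₗ[ℝ] ℝ}

lemma card_mul_apply_le_of_sum_eq_zero (hf : ∑ i, f i = 0) (hfN : ∀ i v, f i v ≤ N v)
    (i : ι) (v : E) :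
    Fintype.card ι * f i v ≤ (Fintype.card ι - 1) * (N v + N (-v)) := by
  classical
  have hcard : ((Finset.univ.erase i).card : ℝ) = Fintype.card ι - 1 := by
    rw [Finset.card_erase_of_mem (Finset.mem_univ i), Finset.card_univ,
      Nat.cast_pred (Fintype.card_pos_iff.2 ⟨i⟩)]
  have hsum : ∑ j, f j (-v) = 0 := by
    rw [← LinearMap.sum_apply, hf, LinearMap.zero_apply]
  have hneg : f i v ≤ (Fintype.card ι - 1) * N (-v) := calc
    f i v = ∑ j ∈ Finset.univ.erase i, f j (-v) := by
      rw [Finset.sum_erase_eq_sub (Finset.mem_univ i), hsum, map_neg, zero_sub, neg_neg]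
    _ ≤ (Finset.univ.erase i).card • N (-v) := Finset.sum_le_card_nsmul _ _ _ fun j _ => hfN j _
    _ = (Fintype.card ι - 1) * N (-v) := by rw [nsmul_eq_mul, hcard]
  have hpos : (Fintype.card ι - 1 : ℝ) * f i v ≤ (Fintype.card ι - 1) * N v :=
    mul_le_mul_of_nonneg_left (hfN i v) (hcard ▸ Nat.cast_nonneg _)
  linarith

lemma sum_sum_apply_sub_add_apply_sub (hf : ∑ i, f i = 0) (x : ι → E) :
    ∑ i, ∑ j, (f i (x i - x j) + f j (x j - x i)) =
      Fintype.card ι * (2 * ∑ i, f i (x i)) := by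
  have hcross : ∑ i, ∑ j, f i (x j) = 0 := by
    rw [Finset.sum_comm]
    simp_rw [← LinearMap.sum_apply, hf, LinearMap.zero_apply, Finset.sum_const_zero]
  have hhalf : ∑ i, ∑ j, f i (x i - x j) = Fintype.card ι * ∑ i, f i (x i) := by
    simp only [map_sub, Finset.sum_sub_distrib, hcross, Finset.sum_const, Finset.card_univ,
      nsmul_eq_mul, Finset.mul_sum, sub_zero]
  simp only [Finset.sum_add_distrib]
  rw [hhalf, Finset.sum_comm, hhalf]
  ring

lemma two_mul_abs_sum_apply_le [Nonempty ι] (hf : ∑ i, f i = 0) (hfN : ∀ i v, f i v ≤ N v)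
    {L : ℝ} (x : ι → E) (hL : ∀ i j, N (x i - x j) + N (x j - x i) ≤ L) :
    2 * |∑ i, f i (x i)| ≤ (Fintype.card ι - 1) * L := by
  classical
  have hcard : (0 : ℝ) < Fintype.card ι := Nat.cast_pos.2 Fintype.card_pos
  have hpair (i j : ι) : |f i (x i - x j) + f j (x j - x i)| ≤ if i = j then 0 else L := by
    split_ifs with hij
    · simp [hij]
    · have hneg (k : ι) (u v : E) : -f k (u - v) ≤ N (v - u) := by
        rw [← map_neg, neg_sub]
        exact hfN k _
      rw [abs_le]
      constructor
      · linarith [hL i j, hneg i (x i) (x j), hneg j (x j) (x i)]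
      · linarith [hL i j, hfN i (x i - x j), hfN j (x j - x i)]
  refine le_of_mul_le_mul_left ?_ hcard
  calc Fintype.card ι * (2 * |∑ i, f i (x i)|)
      = |∑ i, ∑ j, (f i (x i - x j) + f j (x j - x i))| := by
        rw [sum_sum_apply_sub_add_apply_sub hf, abs_mul, abs_mul, Nat.abs_cast, abs_two]
    _ ≤ ∑ i, ∑ j, |f i (x i - x j) + f j (x j - x i)| :=
        (Finset.abs_sum_le_sum_abs _ _).trans
          (Finset.sum_le_sum fun _ _ => Finset.abs_sum_le_sum_abs _ _)
    _ ≤ ∑ i : ι, ∑ j, if i = j then 0 else L :=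
        Finset.sum_le_sum fun i _ => Finset.sum_le_sum fun j _ => hpair i j
    _ = Fintype.card ι * ((Fintype.card ι - 1) * L) := by
        have hrow (i : ι) : (∑ j, if i = j then 0 else L) = (Fintype.card ι - 1) * L := by
          rw [← Finset.add_sum_erase _ _ (Finset.mem_univ i), if_pos rfl, zero_add,
            Finset.sum_congr rfl fun j hj => if_neg (Finset.ne_of_mem_erase hj).symm,
            Finset.sum_const, Finset.card_erase_of_mem (Finset.mem_univ i), nsmul_eq_mul,
            Finset.card_univ, Nat.cast_pred Fintype.card_pos]
        simp only [hrow, Finset.sum_const, Finset.card_univ, nsmul_eq_mul]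

lemma exists_sum_eq_zero_forall_abs_add_lt_one [Nonempty ι] (hf : ∑ i, f i = 0)
    (hfN : ∀ i v, f i v ≤ N v) {κ : Type*} {s : Finset κ} (hs : s.Nonempty) {q : κ → E} {L : ℝ}
    (hL : ∀ k ∈ s, ∀ l ∈ s, N (q k - q l) + N (q l - q k) ≤ L)
    (hlt : (Fintype.card ι - 1) * L < 2 * Fintype.card ι) :
    ∃ y : ι → ℝ, ∑ i, y i = 0 ∧ ∀ i, ∀ k ∈ s, |f i (q k) + y i| < 1 := by
  have hcard : (0 : ℝ) < Fintype.card ι := Nat.cast_pos.2 Fintype.card_pos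
  choose top htop hle_top using fun i => s.exists_max_image (fun k => f i (q k)) hs
  choose bot hbot hbot_le using fun i => s.exists_min_image (fun k => f i (q k)) hs
  have hwidth (i : ι) : f i (q (top i)) - f i (q (bot i)) < 2 := by
    refine lt_of_mul_lt_mul_left (a := (Fintype.card ι : ℝ)) ?_ hcard.le
    calc Fintype.card ι * (f i (q (top i)) - f i (q (bot i)))
        = Fintype.card ι * f i (q (top i) - q (bot i)) := by rw [map_sub]
      _ ≤ (Fintype.card ι - 1) *
            (N (q (top i) - q (bot i)) + N (-(q (top i) - q (bot i)))) :=
          card_mul_apply_le_of_sum_eq_zero hf hfN i _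
      _ ≤ (Fintype.card ι - 1) * L := by
          rw [neg_sub]
          exact mul_le_mul_of_nonneg_left (hL _ (htop i) _ (hbot i))
            (sub_nonneg.2 (Nat.one_le_cast.2 Fintype.card_pos))
      _ < Fintype.card ι * 2 := by rwa [mul_comm _ (2 : ℝ)]
  have hsum_top := two_mul_abs_sum_apply_le hf hfN (fun i => q (top i))
    fun i j => hL _ (htop i) _ (htop j)
  have hsum_bot := two_mul_abs_sum_apply_le hf hfN (fun i => q (bot i))
    fun i j => hL _ (hbot i) _ (hbot j)
  obtain ⟨y, hy, hmem⟩ := exists_sum_eq_of_sum_lt_of_lt_sum (c := 0)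
    (a := fun i => -1 - f i (q (bot i))) (b := fun i => 1 - f i (q (top i)))
    (fun i => by linarith [hwidth i])
    (by
      simp only [Finset.sum_sub_distrib, Finset.sum_const, Finset.card_univ, nsmul_eq_mul]
      linarith [neg_le_abs (∑ i, f i (q (bot i)))])
    (by
      simp only [Finset.sum_sub_distrib, Finset.sum_const, Finset.card_univ, nsmul_eq_mul]
      linarith [le_abs_self (∑ i, f i (q (top i)))])
  refine ⟨y, hy, fun i k hk => abs_lt.2 ⟨?_, ?_⟩⟩
  · linarith [hbot_le i k hk, (hmem i).1]
  · linarith [hle_top i k hk, (hmem i).2]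

end ZeroSumFunctionals

section FacetFunctional

variable {ι E : Type*} [Fintype ι]

/-- The `i`-th outer facet functional of the simplex with vertices `b`, scaled so that it equals
`1` on the facet opposite to `b i` when the centroid of the simplex is the origin. These
functionals are then the vertices of the polar body. -/
noncomputable def facetFunctional [AddCommGroup E] [Module ℝ E] (b : AffineBasis ι ℝ E) (i : ι) :
    E →ₗ[ℝ] ℝ :=
  -(Fintype.card ι : ℝ) • (b.coord i).linear

section Module

variable [AddCommGroup E] [Module ℝ E] (b : AffineBasis ι ℝ E)

lemma sum_facetFunctional : ∑ i, facetFunctional b i = 0 := by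
  ext x
  simp only [facetFunctional, LinearMap.sum_apply, LinearMap.smul_apply, LinearMap.zero_apply,
    ← Finset.smul_sum, AffineMap.decomp', Pi.sub_apply, Finset.sum_sub_distrib,
    b.sum_coord_apply_eq_one, sub_self, smul_zero]

lemma sum_facetFunctional_apply (x : E) : ∑ i, facetFunctional b i x = 0 := by
  rw [← LinearMap.sum_apply, sum_facetFunctional, LinearMap.zero_apply]

variable {b}

lemma facetFunctional_apply (hb : ∑ i, b i = 0) (i : ι) (x : E) :
    facetFunctional b i x = 1 - Fintype.card ι * b.coord i x := by
  classical
  have hlin (y : E) : (b.coord i).linear y = b.coord i y - b.coord i 0 := by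
    rw [AffineMap.decomp', Pi.sub_apply]
  have hcentroid : Fintype.card ι * b.coord i 0 = 1 := by
    have h := map_sum (b.coord i).linear b Finset.univ
    simp only [hb, hlin, Finset.sum_sub_distrib, b.coord_apply, Finset.sum_ite_eq,
      Finset.mem_univ, if_true, Finset.sum_const, Finset.card_univ, nsmul_eq_mul] at h
    linarith
  rw [facetFunctional, LinearMap.smul_apply, hlin, smul_eq_mul, ← hcentroid]
  ring

lemma facetFunctional_vertex [DecidableEq ι] (hb : ∑ i, b i = 0) (i j : ι) :
    facetFunctional b i (b j) = 1 - if i = j then (Fintype.card ι : ℝ) else 0 := by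
  rw [facetFunctional_apply hb, b.coord_apply, mul_ite, mul_one, mul_zero]

lemma exists_forall_facetFunctional_eq (hb : ∑ i, b i = 0) {y : ι → ℝ} (hy : ∑ i, y i = 0) :
    ∃ x, ∀ i, facetFunctional b i x = y i := by
  classical
  have : Nonempty ι := b.nonempty
  have hcard : (Fintype.card ι : ℝ) ≠ 0 := Nat.cast_ne_zero.2 Fintype.card_ne_zero
  refine ⟨-(Fintype.card ι : ℝ)⁻¹ • ∑ j, y j • b j, fun i => ?_⟩
  simp only [map_smul, map_sum, facetFunctional_vertex hb, smul_eq_mul, mul_sub, mul_one, mul_ite,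
    mul_zero, Finset.sum_sub_distrib, Finset.sum_ite_eq, Finset.mem_univ, if_true, hy]
  field_simp
  ring

lemma mem_convexHull_range_iff (hb : ∑ i, b i = 0) {x : E} :
    x ∈ convexHull ℝ (Set.range b) ↔ ∀ i, facetFunctional b i x ≤ 1 := by
  have : Nonempty ι := b.nonempty
  have hcard : (0 : ℝ) < Fintype.card ι := Nat.cast_pos.2 Fintype.card_pos
  simp only [b.convexHull_eq_nonneg_coord, Set.mem_ofPred_eq, facetFunctional_apply hb,
    sub_le_self_iff, mul_nonneg_iff_of_pos_left hcard]

lemma mem_convexHull_range_inter_neg_iff (hb : ∑ i, b i = 0) {x : E} :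
    x ∈ convexHull ℝ (Set.range b) ∩ -convexHull ℝ (Set.range b) ↔
      ∀ i, |facetFunctional b i x| ≤ 1 := by
  simp only [Set.mem_inter_iff, Set.mem_neg, mem_convexHull_range_iff hb, map_neg, ← forall_and,
    abs_le', neg_le]

lemma mem_convexHull_range_sub_self_iff (hb : ∑ i, b i = 0) {x : E} :
    x ∈ convexHull ℝ (Set.range b) - convexHull ℝ (Set.range b) ↔
      ∑ i, max (facetFunctional b i x) 0 ≤ Fintype.card ι := by
  have : Nonempty ι := b.nonempty
  have hcard : (0 : ℝ) < Fintype.card ι := Nat.cast_pos.2 Fintype.card_pos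
  constructor
  · rintro ⟨y, hy, z, hz, rfl⟩
    rw [mem_convexHull_range_iff hb] at hy hz
    calc ∑ i, max (facetFunctional b i (y - z)) 0
        ≤ ∑ i, (1 - facetFunctional b i z) := Finset.sum_le_sum fun i _ =>
          max_le (by rw [map_sub]; linarith [hy i]) (sub_nonneg.2 (hz i))
      _ = Fintype.card ι := by
        rw [Finset.sum_sub_distrib, sum_facetFunctional_apply, sub_zero, Finset.sum_const,
          Finset.card_univ, nsmul_eq_mul, mul_one]
  · intro hx
    let s := 1 - (∑ i, max (facetFunctional b i x) 0) / Fintype.card ι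
    have hs : 0 ≤ s := sub_nonneg.2 ((div_le_one hcard).2 hx)
    obtain ⟨z, hz⟩ := exists_forall_facetFunctional_eq hb
      (y := fun i => 1 - s - max (facetFunctional b i x) 0) (by
        simp only [s, sub_sub_cancel, Finset.sum_sub_distrib, Finset.sum_const, Finset.card_univ,
          nsmul_eq_mul, mul_div_cancel₀ _ hcard.ne', sub_self])
    refine ⟨x + z, (mem_convexHull_range_iff hb).2 fun i => ?_, z,
      (mem_convexHull_range_iff hb).2 fun i => ?_, add_sub_cancel_right x z⟩
    · rw [map_add, hz]
      linarith [le_max_left (facetFunctional b i x) 0]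
    · rw [hz]
      linarith [le_max_right (facetFunctional b i x) 0]

end Module

lemma sum_max_zero_le_iff_forall_abs_le {u : Fin 3 → ℝ} (hu : ∑ i, u i = 0) {c : ℝ} :
    ∑ i, max (u i) 0 ≤ c ↔ ∀ i, |u i| ≤ c := by
  simp only [Fin.sum_univ_three, Fin.forall_fin_succ, Fin.forall_fin_zero,
    Fin.succ_zero_eq_one, Fin.succ_one_eq_two, and_true] at hu ⊢
  grind

lemma triangle_sub_self_eq_smul_inter_neg [AddCommGroup E] [Module ℝ E]
    {b : AffineBasis (Fin 3) ℝ E} (hb : ∑ i, b i = 0) :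
    convexHull ℝ (Set.range b) - convexHull ℝ (Set.range b) =
      (3 : ℝ) • (convexHull ℝ (Set.range b) ∩ -convexHull ℝ (Set.range b)) := by
  ext x
  have hscale (i : Fin 3) :
      |facetFunctional b i ((3 : ℝ)⁻¹ • x)| ≤ 1 ↔ |facetFunctional b i x| ≤ 3 := by
    rw [map_smul, smul_eq_mul, abs_mul, abs_of_pos (by norm_num : (0 : ℝ) < 3⁻¹),
      inv_mul_le_iff₀ three_pos, mul_one]
  rw [Set.mem_smul_set_iff_inv_smul_mem₀ three_ne_zero, mem_convexHull_range_inter_neg_iff hb,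
    mem_convexHull_range_sub_self_iff hb, Fintype.card_fin,
    sum_max_zero_le_iff_forall_abs_le (sum_facetFunctional_apply b x)]
  simp only [hscale, Nat.cast_ofNat]

section Normed

variable [NormedAddCommGroup E] [NormedSpace ℝ E] {b : AffineBasis ι ℝ E}

lemma mem_interior_convexHull_range_iff (hb : ∑ i, b i = 0) {x : E} :
    x ∈ interior (convexHull ℝ (Set.range b)) ↔ ∀ i, facetFunctional b i x < 1 := by
  have : Nonempty ι := b.nonempty
  have hcard : (0 : ℝ) < Fintype.card ι := Nat.cast_pos.2 Fintype.card_pos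
  simp only [b.interior_convexHull, Set.mem_ofPred_eq, facetFunctional_apply hb,
    sub_lt_self_iff, mul_pos_iff_of_pos_left hcard]

lemma mem_interior_convexHull_range_inter_neg_iff (hb : ∑ i, b i = 0) {x : E} :
    x ∈ interior (convexHull ℝ (Set.range b) ∩ -convexHull ℝ (Set.range b)) ↔
      ∀ i, |facetFunctional b i x| < 1 := by
  have hneg : interior (-convexHull ℝ (Set.range b)) = -interior (convexHull ℝ (Set.range b)) :=
    ((Homeomorph.neg E).preimage_interior _).symm
  simp only [interior_inter, hneg, Set.mem_inter_iff, Set.mem_neg,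
    mem_interior_convexHull_range_iff hb, map_neg, ← forall_and, abs_lt, neg_lt, and_comm]

lemma convexHull_range_mem_nhds_zero (hb : ∑ i, b i = 0) :
    convexHull ℝ (Set.range b) ∈ nhds 0 :=
  mem_interior_iff_mem_nhds.1 ((mem_interior_convexHull_range_iff hb).2 fun i => by
    rw [map_zero]
    exact zero_lt_one)

end Normed

end FacetFunctional

section SuppNorm

variable {n : ℕ} {K : Set (EuclideanSpace ℝ (Fin n))}

lemma suppNorm_smul (T : Set (EuclideanSpace ℝ (Fin n))) {c : ℝ} (hc : 0 ≤ c)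
    (v : EuclideanSpace ℝ (Fin n)) : suppNorm T (c • v) = c * suppNorm T v := by
  simp only [suppNorm, real_inner_smul_right]
  rw [← smul_eq_mul, ← Real.sSup_smul_of_nonneg hc, ← Set.image_smul, Set.image_image]
  simp only [smul_eq_mul]

lemma suppNorm_zero (T : Set (EuclideanSpace ℝ (Fin n))) : suppNorm T 0 = 0 := by
  simpa using suppNorm_smul T le_rfl 0

lemma zero_mem_polarBody (K : Set (EuclideanSpace ℝ (Fin n))) : 0 ∈ polarBody K := fun q _ => by
  rw [inner_zero_left]
  exact zero_le_one

lemma suppNorm_polarBody_le_one {v : EuclideanSpace ℝ (Fin n)} (hv : v ∈ K) :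
    suppNorm (polarBody K) v ≤ 1 :=
  Real.sSup_le (Set.forall_mem_image.2 fun _ hp => hp v hv) zero_le_one

lemma bddAbove_image_inner_polarBody (hK : K ∈ nhds 0) (v : EuclideanSpace ℝ (Fin n)) :
    BddAbove ((fun p => ⟪p, v⟫) '' polarBody K) := by
  have htendsto : Filter.Tendsto (fun c : ℝ => c • v) (nhdsWithin 0 (Set.Ioi 0)) (nhds 0) := by
    have h : Filter.Tendsto (fun c : ℝ => c • v) (nhds 0) (nhds ((0 : ℝ) • v)) :=
      (continuous_id.smul continuous_const).tendsto 0
    rw [zero_smul] at h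
    exact h.mono_left nhdsWithin_le_nhds
  obtain ⟨c, hcv, hc⟩ := ((htendsto.eventually_mem hK).and self_mem_nhdsWithin).exists
  refine ⟨c⁻¹, Set.forall_mem_image.2 fun p hp => ?_⟩
  have hpv := hp _ hcv
  rwa [real_inner_smul_right, ← le_inv_mul_iff₀ hc, mul_one] at hpv

lemma inner_le_suppNorm_polarBody (hK : K ∈ nhds 0) {p : EuclideanSpace ℝ (Fin n)}
    (hp : p ∈ polarBody K) (v : EuclideanSpace ℝ (Fin n)) :
    ⟪p, v⟫ ≤ suppNorm (polarBody K) v :=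
  le_csSup (bddAbove_image_inner_polarBody hK v) (Set.mem_image_of_mem _ hp)

lemma apply_le_suppNorm_polarBody (hK : K ∈ nhds 0) {φ : EuclideanSpace ℝ (Fin n) →ₗ[ℝ] ℝ}
    (hφ : ∀ x ∈ K, φ x ≤ 1) (v : EuclideanSpace ℝ (Fin n)) :
    φ v ≤ suppNorm (polarBody K) v := by
  let p := (InnerProductSpace.toDual ℝ _).symm φ.toContinuousLinearMap
  have hp (x : EuclideanSpace ℝ (Fin n)) : ⟪p, x⟫ = φ x := InnerProductSpace.toDual_symm_apply
  rw [← hp]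
  exact inner_le_suppNorm_polarBody hK (fun x hx => (hp x).trans_le (hφ x hx)) v

lemma suppNorm_polarBody_add_le (hK : K ∈ nhds 0) (u v : EuclideanSpace ℝ (Fin n)) :
    suppNorm (polarBody K) (u + v) ≤ suppNorm (polarBody K) u + suppNorm (polarBody K) v := by
  refine csSup_le (Set.Nonempty.image _ ⟨0, zero_mem_polarBody K⟩)
    (Set.forall_mem_image.2 fun p hp => ?_)
  rw [inner_add_right]
  exact add_le_add (inner_le_suppNorm_polarBody hK hp u) (inner_le_suppNorm_polarBody hK hp v)

end SuppNorm

section Xi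

variable {n : ℕ} {K L : Set (EuclideanSpace ℝ (Fin n))} {m : ℕ}
  {q : ℕ → EuclideanSpace ℝ (Fin n)}

lemma NotTranslatableInto.mono (hq : NotTranslatableInto m q L) (hKL : K ⊆ L) :
    NotTranslatableInto m q K := fun t =>
  let ⟨i, hi, hit⟩ := hq t
  ⟨i, hi, fun h => hit (interior_mono hKL h)⟩

lemma notTranslatableInto_smul_iff {c : ℝ} (hc : c ≠ 0) :
    NotTranslatableInto m (c • q) (c • K) ↔ NotTranslatableInto m q K := by
  refine (MulAction.surjective (Units.mk0 c hc)).forall.trans (forall_congr' fun t => ?_)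
  simp only [Units.smul_mk0, Pi.smul_apply, ← smul_add, interior_smul₀ hc,
    Set.smul_mem_smul_set_iff₀ hc]

lemma xi_smul (T K : Set (EuclideanSpace ℝ (Fin n))) {c : ℝ} (hc : 0 < c) :
    xi T (c • K) = c * xi T K := by
  have hlength (m : ℕ) (q : ℕ → EuclideanSpace ℝ (Fin n)) :
      closedLength (suppNorm T) m (c • q) = c • closedLength (suppNorm T) m q := by
    simp only [closedLength, Pi.smul_apply, ← smul_sub, suppNorm_smul T hc.le, smul_eq_mul,
      Finset.mul_sum]
  rw [← smul_eq_mul, xi, xi, ← Real.sInf_smul_of_nonneg hc.le]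
  congr 1
  ext ℓ
  constructor
  · rintro ⟨m, hm, q, hq, rfl⟩
    obtain ⟨q, rfl⟩ : ∃ q', q = c • q' := ⟨c⁻¹ • q, (smul_inv_smul₀ hc.ne' q).symm⟩
    exact ⟨_, ⟨m, hm, q, (notTranslatableInto_smul_iff hc.ne').1 hq, rfl⟩, (hlength m q).symm⟩
  · rintro ⟨_, ⟨m, hm, q, hq, rfl⟩, rfl⟩
    exact ⟨m, hm, c • q, (notTranslatableInto_smul_iff hc.ne').2 hq, (hlength m q).symm⟩

end Xi

section Simplex

variable {n : ℕ}

lemma two_mul_card_le_of_notTranslatableInto_inter_neg {ι : Type*} [Fintype ι]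
    {b : AffineBasis ι ℝ (EuclideanSpace ℝ (Fin n))} (hb : ∑ i, b i = 0) {m : ℕ} (hm : 0 < m)
    {q : ℕ → EuclideanSpace ℝ (Fin n)}
    (hq : NotTranslatableInto m q
      (convexHull ℝ (Set.range b) ∩ -convexHull ℝ (Set.range b))) :
    2 * Fintype.card ι ≤
      (Fintype.card ι - 1) *
        closedLength (suppNorm (polarBody (convexHull ℝ (Set.range b)))) m q := by
  have : Nonempty ι := b.nonempty
  have hK := convexHull_range_mem_nhds_zero hb
  by_contra! hlt
  obtain ⟨y, hy, habs⟩ := exists_sum_eq_zero_forall_abs_add_lt_one (sum_facetFunctional b)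
    (fun i => apply_le_suppNorm_polarBody hK fun x hx => (mem_convexHull_range_iff hb).1 hx i)
    (Finset.nonempty_range_iff.2 hm.ne')
    (fun k hk l hl => add_sub_rev_le_closedLength (suppNorm_zero _).le
      (suppNorm_polarBody_add_le hK) q (Finset.mem_range.1 hk) (Finset.mem_range.1 hl)) hlt
  obtain ⟨t, ht⟩ := exists_forall_facetFunctional_eq hb hy
  obtain ⟨k, hk, hnot⟩ := hq t
  refine hnot ((mem_interior_convexHull_range_inter_neg_iff hb).2 fun i => ?_)
  rw [map_add, ht]
  exact habs i k (Finset.mem_range.2 hk)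

variable {b : AffineBasis (Fin (n + 1)) ℝ (EuclideanSpace ℝ (Fin n))}

/-- The closed polygonal line whose successive edges are `(2 / n) • b 0, …, (2 / n) • b n`; it is
a shortest one that cannot be translated into the interior of the simplex with vertices `b` and
centroid `0`. The index is read modulo `n + 1`. -/
noncomputable def vertexPolygon (b : AffineBasis (Fin (n + 1)) ℝ (EuclideanSpace ℝ (Fin n)))
    (k : ℕ) : EuclideanSpace ℝ (Fin n) :=
  ∑ l ∈ Finset.range k, (2 / n : ℝ) • b (Fin.ofNat (n + 1) l)

lemma facetFunctional_vertexPolygon (hb : ∑ i, b i = 0) (i : Fin (n + 1)) :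
    facetFunctional b i (vertexPolygon b i) = 2 / n * i := by
  have hvertex : ∀ l ∈ Finset.range i, facetFunctional b i (b (Fin.ofNat (n + 1) l)) = 1 := by
    intro l hl
    have hli : i ≠ Fin.ofNat (n + 1) l := by
      intro h
      have hval := congrArg Fin.val h
      rw [Fin.val_ofNat, Nat.mod_eq_of_lt ((Finset.mem_range.1 hl).trans i.2)] at hval
      exact (Finset.mem_range.1 hl).ne' hval
    rw [facetFunctional_vertex hb, if_neg hli, sub_zero]
  simp only [vertexPolygon, ← Finset.smul_sum, map_smul, map_sum, smul_eq_mul]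
  rw [Finset.sum_congr rfl hvertex, Finset.sum_const, Finset.card_range, nsmul_one]

lemma notTranslatableInto_vertexPolygon (hn : n ≠ 0) (hb : ∑ i, b i = 0) :
    NotTranslatableInto (n + 1) (vertexPolygon b) (convexHull ℝ (Set.range b)) := by
  intro t
  by_contra! hinterior
  have hlt : ∑ i, facetFunctional b i (vertexPolygon b i + t) < ∑ _i : Fin (n + 1), (1 : ℝ) :=
    Finset.sum_lt_sum_of_nonempty Finset.univ_nonempty fun i _ =>
      (mem_interior_convexHull_range_iff hb).1 (hinterior i i.2) i
  have hgauss : (∑ i : Fin (n + 1), (i : ℝ)) * 2 = (n + 1) * n := by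
    have h := Finset.sum_range_id_mul_two (n + 1)
    rw [Nat.add_sub_cancel] at h
    rw [Fin.sum_univ_eq_sum_range fun k : ℕ => (k : ℝ), ← Nat.cast_sum]
    exact_mod_cast h
  refine hlt.ne ?_
  simp only [map_add, facetFunctional_vertexPolygon hb, Finset.sum_add_distrib,
    sum_facetFunctional_apply, ← Finset.mul_sum, Finset.sum_const, Finset.card_univ,
    Fintype.card_fin, nsmul_one]
  push_cast
  field_simp
  linarith

lemma closedLength_vertexPolygon_le (hb : ∑ i, b i = 0) :
    closedLength (suppNorm (polarBody (convexHull ℝ (Set.range b)))) (n + 1) (vertexPolygon b) ≤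
      2 * (n + 1) / n := by
  have hclosed : ∑ l ∈ Finset.range (n + 1), (2 / n : ℝ) • b (Fin.ofNat (n + 1) l) = 0 := by
    rw [← Finset.smul_sum, Finset.sum_range]
    simp only [Fin.ofNat_eq_cast, Fin.cast_val_eq_self, hb, smul_zero]
  calc closedLength _ _ _
      = ∑ l ∈ Finset.range (n + 1),
          suppNorm (polarBody (convexHull ℝ (Set.range b)))
            ((2 / n : ℝ) • b (Fin.ofNat (n + 1) l)) :=
        closedLength_sum_range _ hclosed
    _ ≤ ∑ _l ∈ Finset.range (n + 1), (2 / n : ℝ) := Finset.sum_le_sum fun l _ => by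
        rw [suppNorm_smul _ (by positivity)]
        exact mul_le_of_le_one_right (by positivity)
          (suppNorm_polarBody_le_one (subset_convexHull ℝ _ (Set.mem_range_self _)))
    _ = 2 * (n + 1) / n := by
        rw [Finset.sum_const, Finset.card_range, nsmul_eq_mul, Nat.cast_succ]
        ring

lemma xi_polarBody_eq_of_inter_neg_subset (hn : n ≠ 0) (hb : ∑ i, b i = 0)
    {S : Set (EuclideanSpace ℝ (Fin n))}
    (hS : convexHull ℝ (Set.range b) ∩ -convexHull ℝ (Set.range b) ⊆ S)
    (hS' : S ⊆ convexHull ℝ (Set.range b)) :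
    xi (polarBody (convexHull ℝ (Set.range b))) S = 2 * (n + 1) / n := by
  have hlower {m : ℕ} {q : ℕ → EuclideanSpace ℝ (Fin n)} (hm : 2 ≤ m)
      (hq : NotTranslatableInto m q S) :
      2 * (n + 1) / n ≤ closedLength (suppNorm (polarBody (convexHull ℝ (Set.range b)))) m q := by
    have h := two_mul_card_le_of_notTranslatableInto_inter_neg hb (two_pos.trans_le hm)
      (hq.mono hS)
    rw [Fintype.card_fin, Nat.cast_succ, add_sub_cancel_right] at h
    rwa [div_le_iff₀' (Nat.cast_pos.2 hn.bot_lt)]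
  have hm : 2 ≤ n + 1 := Nat.succ_le_succ (Nat.one_le_iff_ne_zero.2 hn)
  have hq := (notTranslatableInto_vertexPolygon hn hb).mono hS'
  refine IsLeast.csInf_eq ⟨⟨n + 1, hm, vertexPolygon b, hq, ?_⟩, ?_⟩
  · exact le_antisymm (hlower hm hq) (closedLength_vertexPolygon_le hb)
  · rintro _ ⟨m, hm, q, hq, rfl⟩
    exact hlower hm hq

end Simplex

lemma affineIndependent_of_dist_eq {V P : Type*} [NormedAddCommGroup V] [NormedSpace ℝ V]
    [MetricSpace P] [NormedAddTorsor V P] {A B C : P} (hpos : 0 < dist A B)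
    (h1 : dist A B = dist B C) (h2 : dist B C = dist C A) : AffineIndependent ℝ ![A, B, C] := by
  rw [affineIndependent_iff_not_collinear_set]
  intro hcol
  rcases hcol.wbtw_or_wbtw_or_wbtw with h | h | h <;>
    linarith [h.dist_add_dist, dist_comm A B, dist_comm B C, dist_comm C A]

theorem xi_diff_equilateral_triangle_general (A B C : EuclideanSpace ℝ (Fin 2))
    (hABC : AffineIndependent ℝ ![A, B, C]) (hcent : A + B + C = 0)
    (K : Set (EuclideanSpace ℝ (Fin 2))) (hK : K = convexHull ℝ {A, B, C}) :
    xi (polarBody K) (K - K) = 3 * xi (polarBody K) K := by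
  let b : AffineBasis (Fin 3) ℝ (EuclideanSpace ℝ (Fin 2)) :=
    ⟨![A, B, C], hABC, hABC.affineSpan_eq_top_iff_card_eq_finrank_add_one.2 (by simp)⟩
  have hb : ∑ i, b i = 0 := (Fin.sum_univ_three b).trans hcent
  have hrange : Set.range b = {A, B, C} := by
    change Set.range ![A, B, C] = {A, B, C}
    rw [Matrix.range_cons, Matrix.range_cons_cons_empty, Set.singleton_union]
  rw [hK, ← hrange, triangle_sub_self_eq_smul_inter_neg hb, xi_smul _ _ three_pos,
    xi_polarBody_eq_of_inter_neg_subset two_ne_zero hb subset_rfl Set.inter_subset_left,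
    xi_polarBody_eq_of_inter_neg_subset two_ne_zero hb Set.inter_subset_left subset_rfl]

/-- For an equilateral triangle `K` centered at the origin in the plane,
`ξ_{K°}(K − K) = 3 ξ_{K°}(K)`; in particular the Rogers–Shepard type inequality
`ξ_T(K−K) ≤ (n+1) ξ_T(K)` is sharp in the plane. -/
theorem xi_diff_equilateral_triangle (A B C : EuclideanSpace ℝ (Fin 2))
    (hpos : 0 < dist A B) (h1 : dist A B = dist B C) (h2 : dist B C = dist C A)
    (hcent : A + B + C = 0)
    (K : Set (EuclideanSpace ℝ (Fin 2))) (hK : K = convexHull ℝ {A, B, C}) :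
    xi (polarBody K) (K - K) = 3 * xi (polarBody K) K := by
  exact xi_diff_equilateral_triangle_general A B C (affineIndependent_of_dist_eq hpos h1 h2)
    hcent K hK
end

section
/- For every triangle Δ ⊂ ℝ² (a nondegenerate triangle regarded as a convex body), ξ_B(Δ) ≥ √3 · w_B(Δ). More precisely, if the trajectory realizing ξ_B(Δ) is the 3-periodic one with vertices at the feet of the altitudes of Δ, its length equals twice the semiperimeter of the orthic triangle and satisfies this bound, the width of Δ being the altitude from the vertex of maximal angle. -/
open scoped RealInnerProductSpace Pointwise
open MeasureTheory

/-!
Let `g i` be the gradients of the barycentric coordinates of the triangle: `∑ i, g i = 0`, and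
`‖g i‖` is the inverse of the altitude from the vertex `b i`. With `G = max ‖g i‖`, both sides are
compared with `1 / G`, the smallest altitude.

* Width: any `v` equals `∑ i, (⟪v, b i⟫ - m) • g i`. Taking for `m` the median of the `⟪v, b i⟫`
  shows that the breadth in a unit direction is at least `1 / G`, and the direction of the longest
  `g i` attains it. By the sine rule, the longest `g i` belongs to the vertex of maximal angle.
* Length: if the points `q l` do not fit into the interior, then for suitable `x i` among them the
  `i`-th coordinates of the `x i` have a nonpositive sum (otherwise a translation makes all
  coordinates of all the `q l` positive), i.e. `1 ≤ -∑ i, ⟪g i, x i⟫`. As `∑ i, g i = 0`, the `g i`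
  are the edges of a triangle, which by Jung's theorem lies in a ball of radius `G / √3` about some
  `O`; a summation by parts relative to `O` bounds the sum by `G / √3` times the perimeter of the
  `x i`, hence by `G / √3` times the length of the closed path.
-/

section Jung

variable {ι E : Type*} [Fintype ι] [NormedAddCommGroup E] [InnerProductSpace ℝ E]

/-- The variance of the points `p i` taken with weights `w i` of sum `1`, that is, their weighted
mean square distance to their weighted mean. Its maximum over all weights is the squared radius of
the smallest ball containing the points. -/
def weightedVariance (w : ι → ℝ) (p : ι → E) : ℝ :=
  ∑ i, w i * ‖p i - ∑ j, w j • p j‖ ^ 2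

lemma sum_mul_norm_sub_sq {w : ι → ℝ} (hw : ∑ i, w i = 1) (p : ι → E) (x : E) :
    ∑ i, w i * ‖p i - x‖ ^ 2 = weightedVariance w p + ‖∑ i, w i • p i - x‖ ^ 2 := by
  set O := ∑ i, w i • p i with hO
  have cross_term : ∑ i, w i * ⟪p i - O, O - x⟫ = 0 := by
    have : ∑ i, w i • (p i - O) = 0 := by
      simp only [smul_sub, Finset.sum_sub_distrib, ← Finset.sum_smul, hw, one_smul, ← hO, sub_self]
    simp only [← real_inner_smul_left, ← sum_inner, this, inner_zero_left]
  calc ∑ i, w i * ‖p i - x‖ ^ 2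
      = ∑ i, (w i * ‖p i - O‖ ^ 2 + 2 * (w i * ⟪p i - O, O - x⟫) + w i * ‖O - x‖ ^ 2) := by
        refine Finset.sum_congr rfl fun i _ => ?_
        rw [← sub_add_sub_cancel (p i) O x, norm_add_sq_real]
        ring
    _ = weightedVariance w p + ‖O - x‖ ^ 2 := by
        rw [Finset.sum_add_distrib, Finset.sum_add_distrib, ← Finset.mul_sum, cross_term,
          ← Finset.sum_mul, hw, weightedVariance]
        ring

lemma two_mul_weightedVariance_le {w : ι → ℝ} (hw : w ∈ stdSimplex ℝ ι) {p : ι → E} {c : ℝ}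
    (hp : ∀ i j, ‖p i - p j‖ ≤ c) :
    2 * weightedVariance w p ≤ (1 - (Fintype.card ι : ℝ)⁻¹) * c ^ 2 := by
  classical
  obtain ⟨hw0, hw1⟩ := hw
  set O := ∑ i, w i • p i
  have mean_sq_dist_le (j : ι) : weightedVariance w p + ‖p j - O‖ ^ 2 ≤ (1 - w j) * c ^ 2 := by
    rw [norm_sub_rev, ← sum_mul_norm_sub_sq hw1, ← hw1,
      ← Finset.sum_erase_eq_sub (Finset.mem_univ j), Finset.sum_mul,
      ← Finset.sum_erase (a := j) _ (by simp)]
    gcongr with i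
    · exact hw0 i
    · exact hp i j
  have one_le : 1 ≤ (∑ j, w j ^ 2) * Fintype.card ι := by
    simpa [hw1, mul_comm] using sq_sum_le_card_mul_sum_sq (s := Finset.univ) (f := w)
  have inv_card_le : (Fintype.card ι : ℝ)⁻¹ ≤ ∑ j, w j ^ 2 :=
    inv_eq_one_div (Fintype.card ι : ℝ) ▸
      div_le_of_le_mul₀ (Nat.cast_nonneg _) (Finset.sum_nonneg fun _ _ => sq_nonneg _) one_le
  calc 2 * weightedVariance w p
      = ∑ j, w j * (weightedVariance w p + ‖p j - O‖ ^ 2) := by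
        simp only [mul_add, Finset.sum_add_distrib, ← Finset.sum_mul, hw1]
        rw [weightedVariance]
        ring
    _ ≤ ∑ j, w j * ((1 - w j) * c ^ 2) := by
        gcongr with j
        · exact hw0 j
        · exact mean_sq_dist_le j
    _ = (1 - ∑ j, w j ^ 2) * c ^ 2 := by
        simp only [mul_sub, sub_mul, ← mul_assoc, Finset.sum_sub_distrib, ← Finset.sum_mul, mul_one,
          hw1, pow_two]
    _ ≤ (1 - (Fintype.card ι : ℝ)⁻¹) * c ^ 2 := by gcongr

lemma weightedVariance_lineMap_single [DecidableEq ι] {w : ι → ℝ} (hw : ∑ i, w i = 1)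
    (p : ι → E) (i : ι) (t : ℝ) :
    weightedVariance (AffineMap.lineMap w (Pi.single i 1) t) p =
      (1 - t) * (weightedVariance w p + t * ‖p i - ∑ j, w j • p j‖ ^ 2) := by
  set O := ∑ j, w j • p j with hO
  set v : ι → ℝ := AffineMap.lineMap w (Pi.single i 1) t with hv
  have v_apply (j : ι) : v j = (1 - t) * w j + t * Pi.single (M := fun _ => ℝ) i 1 j := by
    simp [hv, AffineMap.lineMap_apply_module]
  have sum_v : ∑ j, v j = 1 := by
    simp [v_apply, Finset.sum_add_distrib, ← Finset.mul_sum, hw]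
  have mean_v : ∑ j, v j • p j - O = t • (p i - O) := by
    simp only [v_apply, add_smul, mul_smul, Finset.sum_add_distrib, ← Finset.smul_sum, ← hO,
      Pi.single_apply, ite_smul, one_smul, zero_smul, Finset.sum_ite_eq', Finset.mem_univ, if_true]
    module
  have moment_v :
      ∑ j, v j * ‖p j - O‖ ^ 2 = (1 - t) * weightedVariance w p + t * ‖p i - O‖ ^ 2 := by
    simp [v_apply, add_mul, mul_assoc, Finset.sum_add_distrib, ← Finset.mul_sum, weightedVariance,
      ← hO, Pi.single_apply]
  have huygens := sum_mul_norm_sub_sq sum_v p O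
  rw [mean_v, moment_v, norm_smul, mul_pow, Real.norm_eq_abs, sq_abs] at huygens
  linear_combination -huygens

lemma exists_norm_sub_sq_le_weightedVariance [Nonempty ι] (p : ι → E) :
    ∃ w ∈ stdSimplex ℝ ι, ∀ i, ‖p i - ∑ j, w j • p j‖ ^ 2 ≤ weightedVariance w p := by
  classical
  have cont : Continuous fun w : ι → ℝ => weightedVariance w p := by
    unfold weightedVariance
    fun_prop
  obtain ⟨w, hw, hmax⟩ := (isCompact_stdSimplex ℝ ι).exists_isMaxOn
    ⟨_, single_mem_stdSimplex ℝ (Classical.arbitrary ι)⟩ cont.continuousOn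
  refine ⟨w, hw, fun i => ?_⟩
  set V := weightedVariance w p
  set r := ‖p i - ∑ j, w j • p j‖
  -- compare the maximizer `w` with its perturbations towards the vertex `i` of the simplex
  have first_order (t : ℝ) (ht : t ∈ Set.Ioo 0 1) : (1 - t) * r ^ 2 ≤ V := by
    have hv := (convex_stdSimplex ℝ ι).lineMap_mem hw (single_mem_stdSimplex ℝ i) ⟨ht.1.le, ht.2.le⟩
    have hle : weightedVariance (AffineMap.lineMap w (Pi.single i 1) t) p ≤ V := hmax hv
    rw [weightedVariance_lineMap_single hw.2] at hle
    exact le_of_mul_le_mul_left (by linear_combination hle) ht.1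
  have lim : Filter.Tendsto (fun t : ℝ => (1 - t) * r ^ 2) (nhdsWithin 0 (Set.Ioi 0))
      (nhds ((1 - 0) * r ^ 2)) :=
    Continuous.tendsto' (by fun_prop) _ _ rfl |>.mono_left nhdsWithin_le_nhds
  simpa using le_of_tendsto lim <|
    Filter.mem_of_superset (Ioo_mem_nhdsGT zero_lt_one) first_order

/-- Jung's theorem for a finite family of points. -/
theorem exists_norm_sub_sq_le_of_pairwise_norm_sub_le [Nonempty ι] {p : ι → E} {c : ℝ}
    (hp : ∀ i j, ‖p i - p j‖ ≤ c) :
    ∃ O, ∀ i, 2 * ‖p i - O‖ ^ 2 ≤ (1 - (Fintype.card ι : ℝ)⁻¹) * c ^ 2 := by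
  obtain ⟨w, hw, hmax⟩ := exists_norm_sub_sq_le_weightedVariance p
  exact ⟨_, fun i => (mul_le_mul_of_nonneg_left (hmax i) zero_le_two).trans
    (two_mul_weightedVariance_le hw hp)⟩

lemma exists_sqrt_three_mul_norm_sub_le {p : Fin 3 → E} {c : ℝ}
    (hp : ∀ i j, ‖p i - p j‖ ≤ c) : ∃ O, ∀ i, √3 * ‖p i - O‖ ≤ c := by
  obtain ⟨O, hO⟩ := exists_norm_sub_sq_le_of_pairwise_norm_sub_le hp
  refine ⟨O, fun i => le_of_sq_le_sq ?_ ((norm_nonneg _).trans (hp i i))⟩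
  have radius_sq_le := hO i
  rw [Fintype.card_fin] at radius_sq_le
  rw [mul_pow, Real.sq_sqrt zero_le_three]
  push_cast at radius_sq_le
  linarith

theorem sqrt_three_mul_sum_inner_le {g x : Fin 3 → E} {G : ℝ} (hsum : ∑ i, g i = 0)
    (hg : ∀ i, ‖g i‖ ≤ G) :
    √3 * -∑ i, ⟪g i, x i⟫ ≤ G * (‖x 0 - x 1‖ + ‖x 1 - x 2‖ + ‖x 2 - x 0‖) := by
  rw [Fin.sum_univ_three] at hsum
  have hg2 : g 2 = -g 0 - g 1 := by rw [← sub_eq_zero, ← hsum]; abel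
  have hG : 0 ≤ G := (norm_nonneg _).trans (hg 0)
  -- the triangle with the vectors `g i` as edges, `g i` being opposite to the vertex `p i`
  let p : Fin 3 → E := ![0, g 2, -g 1]
  have edge (i : Fin 3) : p (i + 1) - p i = g (i + 2) := by
    fin_cases i <;> simp [p, hg2, sub_eq_add_neg, add_comm]
  have cyclic : ∀ i j : Fin 3, i = j ∨ i = j + 1 ∨ j = i + 1 := by decide
  have hp (i j : Fin 3) : ‖p i - p j‖ ≤ G := by
    obtain rfl | rfl | rfl := cyclic i j
    · simpa using hG
    · exact edge j ▸ hg _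
    · exact norm_sub_rev (p i) _ ▸ edge i ▸ hg _
  obtain ⟨O, radius_le⟩ := exists_sqrt_three_mul_norm_sub_le hp
  have inner_le (i : Fin 3) (v : E) : √3 * ⟪p i - O, v⟫ ≤ G * ‖v‖ :=
    calc √3 * ⟪p i - O, v⟫ ≤ √3 * (‖p i - O‖ * ‖v‖) := by gcongr; exact real_inner_le_norm _ _
      _ = √3 * ‖p i - O‖ * ‖v‖ := by ring
      _ ≤ G * ‖v‖ := by gcongr; exact radius_le i
  calc √3 * -∑ i, ⟪g i, x i⟫
      = √3 * ⟪p 0 - O, x 2 - x 1⟫ + √3 * ⟪p 1 - O, x 0 - x 2⟫ + √3 * ⟪p 2 - O, x 1 - x 0⟫ := by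
        simp only [p, Matrix.cons_val, Fin.sum_univ_three, hg2, inner_sub_left, inner_sub_right,
          inner_neg_left, inner_zero_left]
        ring
    _ ≤ G * ‖x 2 - x 1‖ + G * ‖x 0 - x 2‖ + G * ‖x 1 - x 0‖ :=
        add_le_add_three (inner_le _ _) (inner_le _ _) (inner_le _ _)
    _ = G * (‖x 0 - x 1‖ + ‖x 1 - x 2‖ + ‖x 2 - x 0‖) := by
        rw [norm_sub_rev (x 2) (x 1), norm_sub_rev (x 0) (x 2), norm_sub_rev (x 1) (x 0)]
        ring

end Jung

section Barycentric

lemma mem_affineSpan_image_compl_iff {ι k V P : Type*} [Finite ι] [Ring k] [Nontrivial k]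
    [AddCommGroup V] [Module k V] [AddTorsor V P] (b : AffineBasis ι k P) {i : ι} {x : P} :
    x ∈ affineSpan k (b '' {i}ᶜ) ↔ b.coord i x = 0 := by
  cases nonempty_fintype ι
  constructor
  · intro hx
    refine affineSpan_induction hx ?_ fun c u v w hu hv hw => ?_
    · rintro _ ⟨j, hj, rfl⟩
      exact b.coord_apply_ne (Ne.symm hj)
    · rw [AffineMap.map_vadd, map_smul, AffineMap.linearMap_vsub, hu, hv, hw]
      simp
  · intro hx
    rw [← b.affineCombination_coord_eq_self x]
    refine affineCombination_mem_affineSpan_image (b.sum_coord_apply_eq_one x) ?_ b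
    rintro j - hj
    rwa [Set.notMem_compl_iff.1 hj]

variable {ι E : Type*} [NormedAddCommGroup E] [InnerProductSpace ℝ E] [FiniteDimensional ℝ E]
  (b : AffineBasis ι ℝ E)

/-- The gradient of the barycentric coordinate of index `i`: the inner normal of the facet opposite
to `b i`, with norm the inverse of the altitude from `b i`. -/
noncomputable def coordGradient (i : ι) : E :=
  (InnerProductSpace.toDual ℝ E).symm ((b.coord i).linear.toContinuousLinearMap)

lemma inner_coordGradient_sub (i : ι) (x y : E) :
    ⟪coordGradient b i, x - y⟫ = b.coord i x - b.coord i y := by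
  rw [coordGradient, InnerProductSpace.toDual_symm_apply]
  exact (b.coord i).linearMap_vsub x y

lemma inner_coordGradient (i : ι) (x : E) :
    ⟪coordGradient b i, x⟫ = b.coord i x - b.coord i 0 := by
  rw [← inner_coordGradient_sub, sub_zero]

lemma coordGradient_ne_zero [Nontrivial ι] (i : ι) : coordGradient b i ≠ 0 := by
  obtain ⟨j, hji⟩ := exists_ne i
  intro h
  simpa [h, b.coord_apply_ne hji.symm] using inner_coordGradient_sub b i (b i) (b j)

section Fintype

variable [Fintype ι]

lemma sum_inner_coordGradient (x : ι → E) :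
    ∑ i, ⟪coordGradient b i, x i⟫ = ∑ i, b.coord i (x i) - 1 := by
  simp only [inner_coordGradient, Finset.sum_sub_distrib, b.sum_coord_apply_eq_one]

lemma sum_coordGradient : ∑ i, coordGradient b i = 0 := by
  refine ext_inner_right ℝ fun v => ?_
  rw [sum_inner, sum_inner_coordGradient, b.sum_coord_apply_eq_one, sub_self, inner_zero_left]

lemma sum_inner_sub_smul_coordGradient (v : E) (m : ℝ) :
    ∑ i, (⟪v, b i⟫ - m) • coordGradient b i = v := by
  refine ext_inner_right ℝ fun x => ?_
  have hx := congr(⟪v, $(b.linear_combination_coord_eq_self x)⟫)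
  have h0 := congr(⟪v, $(b.linear_combination_coord_eq_self 0)⟫)
  simp only [inner_sum, real_inner_smul_right] at hx h0
  simp only [sub_smul, Finset.sum_sub_distrib, ← Finset.smul_sum, sum_coordGradient, smul_zero,
    sub_zero, sum_inner, real_inner_smul_left, inner_coordGradient, mul_sub]
  simp only [mul_comm ⟪v, b _⟫, hx, h0, inner_zero_right, sub_zero]

end Fintype

theorem infDist_affineSpan_image_compl [Finite ι] [Nontrivial ι] (i : ι) :
    Metric.infDist (b i) (affineSpan ℝ (b '' {i}ᶜ)) = ‖coordGradient b i‖⁻¹ := by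
  set g := coordGradient b i with hg
  have g_pos : 0 < ‖g‖ := norm_pos_iff.2 (coordGradient_ne_zero b i)
  let foot := b i - (‖g‖ ^ 2)⁻¹ • g
  have foot_mem : foot ∈ affineSpan ℝ (b '' {i}ᶜ) := by
    rw [mem_affineSpan_image_compl_iff]
    have := inner_coordGradient_sub b i (b i) foot
    rw [b.coord_apply_eq, sub_sub_cancel, real_inner_smul_right, ← hg,
      real_inner_self_eq_norm_sq, inv_mul_cancel₀ (by positivity)] at this
    linarith
  refine le_antisymm ?_ ((Metric.le_infDist ⟨foot, foot_mem⟩).2 fun y hy => ?_)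
  · calc Metric.infDist (b i) (affineSpan ℝ (b '' {i}ᶜ)) ≤ dist (b i) foot :=
          Metric.infDist_le_dist_of_mem foot_mem
      _ = ‖g‖⁻¹ := by
        rw [dist_eq_norm, sub_sub_cancel, norm_smul, norm_inv, norm_pow, norm_norm]
        field_simp
  · rw [SetLike.mem_coe, mem_affineSpan_image_compl_iff] at hy
    rw [inv_le_iff_one_le_mul₀' g_pos, dist_eq_norm]
    calc 1 = ⟪g, b i - y⟫ := by
          rw [inner_coordGradient_sub, b.coord_apply_eq, hy, sub_zero]
      _ ≤ ‖g‖ * ‖b i - y‖ := real_inner_le_norm _ _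

end Barycentric

section Triangle

lemma exists_sum_abs_sub_le_of_mem_Icc {s : Fin 3 → ℝ} {l u : ℝ} (hs : ∀ i, s i ∈ Set.Icc l u) :
    ∃ m, ∑ i, |s i - m| ≤ u - l := by
  have mono := Tuple.monotone_sort s
  set σ := Tuple.sort s
  have h01 : s (σ 0) ≤ s (σ 1) := mono (by decide)
  have h12 : s (σ 1) ≤ s (σ 2) := mono (by decide)
  refine ⟨s (σ 1), ?_⟩
  rw [← Equiv.sum_comp σ, Fin.sum_univ_three, abs_of_nonpos (sub_nonpos.2 h01), sub_self, abs_zero,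
    abs_of_nonneg (sub_nonneg.2 h12)]
  linarith [(hs (σ 0)).1, (hs (σ 2)).2]

variable {E : Type*} [NormedAddCommGroup E] [InnerProductSpace ℝ E] [FiniteDimensional ℝ E]
  (b : AffineBasis (Fin 3) ℝ E) {i j k : Fin 3}

lemma norm_coordGradient_mul_dist (hij : i ≠ j) (hik : i ≠ k) (hjk : j ≠ k) :
    ‖coordGradient b i‖ * dist (b i) (b k) = ‖coordGradient b j‖ * dist (b j) (b k) := by
  have univ_eq : (Finset.univ : Finset (Fin 3)) = {i, j, k} := by
    ext l
    simp only [Finset.mem_univ, Finset.mem_insert, Finset.mem_singleton, true_iff]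
    omega
  set g := coordGradient b
  set x := b i - b k
  set y := b j - b k
  -- `x, y` is a basis of the plane with dual basis `g i, g j`
  have expansion (v : E) : ⟪v, x⟫ • g i + ⟪v, y⟫ • g j = v := by
    conv_rhs => rw [← sum_inner_sub_smul_coordGradient b v ⟪v, b k⟫]
    simp [univ_eq, hij, hik, hjk, x, y, g, inner_sub_right]
  have inner_x : ⟪g i, x⟫ = 1 := by
    rw [inner_coordGradient_sub, b.coord_apply_eq, b.coord_apply_ne hik, sub_zero]
  have inner_y : ⟪g j, y⟫ = 1 := by
    rw [inner_coordGradient_sub, b.coord_apply_eq, b.coord_apply_ne hjk, sub_zero]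
  have hx := congr(⟪g i, $(expansion x)⟫)
  have hy := congr(⟪g j, $(expansion y)⟫)
  simp only [inner_add_right, real_inner_smul_right, inner_x, inner_y,
    real_inner_self_eq_norm_sq, real_inner_comm x y, real_inner_comm (g i) (g j)] at hx hy
  rw [dist_eq_norm, dist_eq_norm, ← sq_eq_sq₀ (by positivity) (by positivity), mul_pow, mul_pow]
  linear_combination hx - hy

open EuclideanGeometry in
lemma norm_coordGradient_le_of_angle_le (hij : i ≠ j) (hik : i ≠ k) (hjk : j ≠ k)
    (h : ∠ (b k) (b j) (b i) ≤ ∠ (b k) (b i) (b j)) :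
    ‖coordGradient b j‖ ≤ ‖coordGradient b i‖ := by
  have not_collinear : ¬Collinear ℝ {b k, b i, b j} :=
    (affineIndependent_iff_not_collinear_of_ne hik.symm hjk.symm hij).1 b.ind
  have side_le : dist (b i) (b k) ≤ dist (b j) (b k) := by
    simpa only [dist_comm (b k)] using (angle_le_iff_dist_le not_collinear).1 h
  refine le_of_mul_le_mul_right ?_ (dist_pos.2 (b.ind.injective.ne hjk))
  rw [← norm_coordGradient_mul_dist b hij hik hjk]
  gcongr

lemma norm_le_mul_of_inner_mem_Icc {G l u : ℝ} (hG : ∀ i, ‖coordGradient b i‖ ≤ G) {v : E}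
    (hv : ∀ i, ⟪v, b i⟫ ∈ Set.Icc l u) : ‖v‖ ≤ (u - l) * G := by
  obtain ⟨m, hm⟩ := exists_sum_abs_sub_le_of_mem_Icc hv
  have hG0 : 0 ≤ G := (norm_nonneg _).trans (hG 0)
  calc ‖v‖ = ‖∑ i, (⟪v, b i⟫ - m) • coordGradient b i‖ := by
        rw [sum_inner_sub_smul_coordGradient]
    _ ≤ ∑ i, |⟪v, b i⟫ - m| * ‖coordGradient b i‖ :=
        norm_sum_le_of_le _ fun i _ => (norm_smul _ _).le
    _ ≤ ∑ i, |⟪v, b i⟫ - m| * G := by gcongr with i; exact hG i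
    _ = (∑ i, |⟪v, b i⟫ - m|) * G := (Finset.sum_mul ..).symm
    _ ≤ (u - l) * G := by gcongr

end Triangle

section Width

variable {n : ℕ}

lemma inner_mem_Icc_of_mem {K : Set (EuclideanSpace ℝ (Fin n))} (hK : Bornology.IsBounded K)
    (p : EuclideanSpace ℝ (Fin n)) {x : EuclideanSpace ℝ (Fin n)} (hx : x ∈ K) :
    ⟪p, x⟫ ∈ Set.Icc (sInf ((fun q => ⟪p, q⟫) '' K)) (sSup ((fun q => ⟪p, q⟫) '' K)) := by
  have bounded : Bornology.IsBounded ((fun q => ⟪p, q⟫) '' K) :=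
    (innerSL ℝ p).lipschitz.isBounded_image hK
  exact ⟨csInf_le bounded.bddBelow ⟨x, hx, rfl⟩, le_csSup bounded.bddAbove ⟨x, hx, rfl⟩⟩

lemma widthB_mul_norm_le {K : Set (EuclideanSpace ℝ (Fin n))} (hK : Bornology.IsBounded K)
    (hne : K.Nonempty) {v : EuclideanSpace ℝ (Fin n)} {l u : ℝ}
    (h : ∀ x ∈ K, ⟪v, x⟫ ∈ Set.Icc l u) : widthB K * ‖v‖ ≤ u - l := by
  have hne_image (p) : ((fun q => ⟪p, q⟫) '' K).Nonempty := hne.image _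
  obtain ⟨x, hx⟩ := hne
  obtain rfl | hv := eq_or_ne v 0
  · simpa using (h x hx).1.trans (h x hx).2
  have bddBelow : BddBelow {w : ℝ | ∃ p : EuclideanSpace ℝ (Fin n), ‖p‖ = 1 ∧
      w = sSup ((fun q => ⟪p, q⟫) '' K) - sInf ((fun q => ⟪p, q⟫) '' K)} := by
    refine ⟨0, ?_⟩
    rintro _ ⟨p, -, rfl⟩
    have := inner_mem_Icc_of_mem hK p hx
    exact sub_nonneg.2 (this.1.trans this.2)
  have hv' : 0 < ‖v‖ := norm_pos_iff.2 hv
  have inner_mem (y) (hy : y ∈ K) : ⟪‖v‖⁻¹ • v, y⟫ ∈ Set.Icc (l / ‖v‖) (u / ‖v‖) := by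
    rw [real_inner_smul_left, inv_mul_eq_div]
    exact ⟨by gcongr; exact (h y hy).1, by gcongr; exact (h y hy).2⟩
  rw [← le_div_iff₀ hv', sub_div]
  refine (csInf_le bddBelow ⟨‖v‖⁻¹ • v, norm_smul_inv_norm hv, rfl⟩).trans (sub_le_sub ?_ ?_)
  · exact csSup_le (hne_image _) (Set.forall_mem_image.2 fun y hy => (inner_mem y hy).2)
  · exact le_csInf (hne_image _) (Set.forall_mem_image.2 fun y hy => (inner_mem y hy).1)

lemma widthB_convexHull_mul_norm_coordGradient_le {ι : Type*} [Finite ι]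
    (b : AffineBasis ι ℝ (EuclideanSpace ℝ (Fin n))) (i : ι) :
    widthB (convexHull ℝ (Set.range b)) * ‖coordGradient b i‖ ≤ 1 := by
  have coord_mem : convexHull ℝ (Set.range b) ⊆ b.coord i ⁻¹' Set.Icc 0 1 := by
    classical
    refine convexHull_min ?_ ((convex_Icc 0 1).affine_preimage _)
    rintro _ ⟨j, rfl⟩
    rw [Set.mem_preimage, b.coord_apply]
    split_ifs <;> simp
  have := widthB_mul_norm_le ((Set.finite_range b).isCompact_convexHull ℝ).isBounded
    ⟨b i, subset_convexHull ℝ _ ⟨i, rfl⟩⟩ (v := coordGradient b i)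
    (l := 0 - b.coord i 0) (u := 1 - b.coord i 0) fun x hx => by
      rw [inner_coordGradient]
      exact ⟨sub_le_sub_right (coord_mem hx).1 _, sub_le_sub_right (coord_mem hx).2 _⟩
  simpa using this

theorem widthB_convexHull_eq_inv_norm_coordGradient
    (b : AffineBasis (Fin 3) ℝ (EuclideanSpace ℝ (Fin n))) {i : Fin 3}
    (hi : ∀ j, ‖coordGradient b j‖ ≤ ‖coordGradient b i‖) :
    widthB (convexHull ℝ (Set.range b)) = ‖coordGradient b i‖⁻¹ := by
  set g := coordGradient b
  have g_ne : g i ≠ 0 := coordGradient_ne_zero b i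
  have g_pos : 0 < ‖g i‖ := norm_pos_iff.2 g_ne
  refine le_antisymm ?_ (le_csInf ⟨_, ‖g i‖⁻¹ • g i, norm_smul_inv_norm g_ne, rfl⟩ ?_)
  · rw [← one_div, le_div_iff₀ g_pos]
    exact widthB_convexHull_mul_norm_coordGradient_le b i
  · rintro _ ⟨p, hp, rfl⟩
    rw [inv_le_iff_one_le_mul₀ g_pos, ← hp]
    exact norm_le_mul_of_inner_mem_Icc b hi fun j =>
      inner_mem_Icc_of_mem ((Set.finite_range b).isCompact_convexHull ℝ).isBounded p
        (subset_convexHull ℝ _ ⟨j, rfl⟩)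

end Width

section ClosedPath

variable {X : Type*} [PseudoMetricSpace X]

lemma perimeter_le_sum_range_dist_of_le {Q : ℕ → X} {i j k m : ℕ} (hQ : Q m = Q 0) (hij : i ≤ j)
    (hjk : j ≤ k) (hkm : k ≤ m) :
    dist (Q i) (Q j) + dist (Q j) (Q k) + dist (Q k) (Q i) ≤
      ∑ l ∈ Finset.range m, dist (Q l) (Q (l + 1)) := by
  have through_zero := dist_triangle (Q k) (Q m) (Q i)
  rw [hQ] at through_zero
  rw [Finset.range_eq_Ico, ← Finset.sum_Ico_consecutive _ (Nat.zero_le k) hkm,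
    ← Finset.sum_Ico_consecutive _ (Nat.zero_le j) hjk,
    ← Finset.sum_Ico_consecutive _ (Nat.zero_le i) hij]
  linarith [dist_le_Ico_sum_dist Q (Nat.zero_le i), dist_le_Ico_sum_dist Q hij,
    dist_le_Ico_sum_dist Q hjk, hQ ▸ dist_le_Ico_sum_dist Q hkm]

lemma perimeter_le_sum_range_dist {Q : ℕ → X} {i j k m : ℕ} (hQ : Q m = Q 0) (hi : i ≤ m)
    (hj : j ≤ m) (hk : k ≤ m) :
    dist (Q i) (Q j) + dist (Q j) (Q k) + dist (Q k) (Q i) ≤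
      ∑ l ∈ Finset.range m, dist (Q l) (Q (l + 1)) := by
  wlog hij : i ≤ j generalizing i j
  · linarith [this hj hi (le_of_not_ge hij), dist_comm (Q i) (Q j), dist_comm (Q j) (Q k),
      dist_comm (Q k) (Q i)]
  obtain hki | hik := le_total k i
  · linarith [perimeter_le_sum_range_dist_of_le hQ hki hij hj]
  obtain hkj | hjk := le_total k j
  · linarith [perimeter_le_sum_range_dist_of_le hQ hik hkj hj, dist_comm (Q i) (Q j),
      dist_comm (Q j) (Q k), dist_comm (Q k) (Q i)]
  · exact perimeter_le_sum_range_dist_of_le hQ hij hjk hk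

end ClosedPath

section Length

lemma coord_add_sum_smul {ι k V : Type*} [Fintype ι] [Ring k] [AddCommGroup V] [Module k V]
    (b : AffineBasis ι k V) {c : ι → k} (hc : ∑ i, c i = 0) (x : V) (j : ι) :
    b.coord j (x + ∑ i, c i • b i) = b.coord j x + c j := by
  classical
  have linear_apply (i : ι) : (b.coord j).linear (b i) = b.coord j (b i) - b.coord j 0 := by
    simpa using (b.coord j).linearMap_vsub (b i) 0
  rw [add_comm, ← vadd_eq_add, AffineMap.map_vadd, vadd_eq_add, add_comm, map_sum]
  simp only [map_smul, linear_apply, smul_eq_mul, mul_sub, Finset.sum_sub_distrib,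
    ← Finset.sum_mul, hc, zero_mul, sub_zero, b.coord_apply, mul_ite, mul_one, mul_zero,
    Finset.sum_ite_eq, Finset.mem_univ, if_true]

variable {n : ℕ}

lemma exists_sum_coord_nonpos_of_notTranslatableInto {ι : Type*} [Fintype ι]
    (b : AffineBasis ι ℝ (EuclideanSpace ℝ (Fin n))) {m : ℕ} {q : ℕ → EuclideanSpace ℝ (Fin n)}
    (hq : NotTranslatableInto m q (convexHull ℝ (Set.range b))) :
    ∃ f : ι → ℕ, (∀ i, f i < m) ∧ ∑ i, b.coord i (q (f i)) ≤ 0 := by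
  obtain ⟨l₀, hl₀, -⟩ := hq 0
  have hrange : (Finset.range m).Nonempty := ⟨l₀, Finset.mem_range.2 hl₀⟩
  choose f f_mem f_min using fun i =>
    (Finset.range m).exists_min_image (fun l => b.coord i (q l)) hrange
  refine ⟨f, fun i => Finset.mem_range.1 (f_mem i), not_lt.1 fun hpos => ?_⟩
  have : Nonempty ι := b.nonempty
  -- translate so that all the minima of the coordinates become equal, to the mean `d`
  set d := (∑ i, b.coord i (q (f i))) / Fintype.card ι with hd
  have d_pos : 0 < d := by positivity
  have sum_shift : ∑ i, (d - b.coord i (q (f i))) = 0 := by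
    rw [Finset.sum_sub_distrib, Finset.sum_const, Finset.card_univ, nsmul_eq_mul, hd,
      mul_div_cancel₀ _ (by simp), sub_self]
  obtain ⟨l, hl, hout⟩ := hq (∑ i, (d - b.coord i (q (f i))) • b i)
  refine hout ?_
  rw [b.interior_convexHull, Set.mem_ofPred_eq]
  intro i
  rw [coord_add_sum_smul b sum_shift]
  linarith [f_min i l (Finset.mem_range.2 hl)]

theorem sqrt_three_le_mul_length (b : AffineBasis (Fin 3) ℝ (EuclideanSpace ℝ (Fin n))) {G : ℝ}
    (hG : ∀ i, ‖coordGradient b i‖ ≤ G) {m : ℕ} {q : ℕ → EuclideanSpace ℝ (Fin n)}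
    (hq : NotTranslatableInto m q (convexHull ℝ (Set.range b))) :
    √3 ≤ G * ∑ i ∈ Finset.range m, ‖q ((i + 1) % m) - q i‖ := by
  obtain ⟨f, hf, sum_coord_nonpos⟩ := exists_sum_coord_nonpos_of_notTranslatableInto b hq
  let Q : ℕ → EuclideanSpace ℝ (Fin n) := fun l => q (l % m)
  have hQ (l : ℕ) (hl : l < m) : Q l = q l := by simp only [Q, Nat.mod_eq_of_lt hl]
  have perimeter_le := perimeter_le_sum_range_dist (Q := Q) (by simp [Q]) (hf 0).le (hf 1).le
    (hf 2).le
  have hG0 : 0 ≤ G := (norm_nonneg _).trans (hG 0)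
  calc √3 ≤ √3 * -∑ i, ⟪coordGradient b i, q (f i)⟫ := by
        rw [sum_inner_coordGradient]
        exact le_mul_of_one_le_right (by positivity) (by linarith)
    _ ≤ G * (‖q (f 0) - q (f 1)‖ + ‖q (f 1) - q (f 2)‖ + ‖q (f 2) - q (f 0)‖) :=
        sqrt_three_mul_sum_inner_le (sum_coordGradient b) hG
    _ ≤ G * ∑ i ∈ Finset.range m, dist (Q i) (Q (i + 1)) := by
        simp only [hQ _ (hf _), dist_eq_norm] at perimeter_le ⊢
        gcongr
    _ = G * ∑ i ∈ Finset.range m, ‖q ((i + 1) % m) - q i‖ := by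
        congr 1
        refine Finset.sum_congr rfl fun i hi => ?_
        rw [hQ i (Finset.mem_range.1 hi), dist_comm, dist_eq_norm]

lemma exists_notTranslatableInto [NeZero n] {K : Set (EuclideanSpace ℝ (Fin n))}
    (hK : Bornology.IsBounded K) :
    ∃ q : ℕ → EuclideanSpace ℝ (Fin n), NotTranslatableInto 2 q K := by
  obtain ⟨R, hR⟩ := Metric.isBounded_iff.1 hK
  obtain ⟨v, hv⟩ := NormedSpace.exists_lt_norm ℝ (EuclideanSpace ℝ (Fin n)) R
  refine ⟨fun l => if l = 0 then 0 else v, fun t => ?_⟩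
  by_contra! h
  have dist_le := hR (interior_subset (h 1 one_lt_two)) (interior_subset (h 0 two_pos))
  rw [dist_add_right, if_neg one_ne_zero, if_pos rfl, dist_zero_right] at dist_le
  exact hv.not_ge dist_le

lemma le_xiB [NeZero n] {K : Set (EuclideanSpace ℝ (Fin n))} (hK : Bornology.IsBounded K) {c : ℝ}
    (h : ∀ m q, NotTranslatableInto m q K →
      c ≤ ∑ i ∈ Finset.range m, ‖q ((i + 1) % m) - q i‖) : c ≤ xiB K := by
  obtain ⟨q₀, hq₀⟩ := exists_notTranslatableInto hK
  refine le_csInf ⟨_, 2, le_rfl, q₀, hq₀, rfl⟩ ?_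
  rintro _ ⟨m, -, q, hq, rfl⟩
  exact h m q hq

end Length

theorem sqrt_three_mul_widthB_le_xiB [NeZero n]
    (b : AffineBasis (Fin 3) ℝ (EuclideanSpace ℝ (Fin n))) :
    √3 * widthB (convexHull ℝ (Set.range b)) ≤ xiB (convexHull ℝ (Set.range b)) := by
  obtain ⟨i, hi⟩ := Finite.exists_max fun i => ‖coordGradient b i‖
  rw [widthB_convexHull_eq_inv_norm_coordGradient b hi]
  refine le_xiB ((Set.finite_range b).isCompact_convexHull ℝ).isBounded fun m q hq => ?_
  rw [mul_inv_le_iff₀' (norm_pos_iff.2 (coordGradient_ne_zero b i))]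
  exact sqrt_three_le_mul_length b hi hq

open EuclideanGeometry in
/-- For every nondegenerate triangle `Δ`, `ξ_B(Δ) ≥ √3 · w_B(Δ)`; moreover the width of
`Δ` is the altitude from the vertex of maximal angle. -/
theorem xiB_triangle_ge_sqrt3_width (A B C : EuclideanSpace ℝ (Fin 2))
    (hnd : AffineIndependent ℝ ![A, B, C]) :
    Real.sqrt 3 * widthB (convexHull ℝ {A, B, C}) ≤ xiB (convexHull ℝ {A, B, C}) ∧
    (∠ A B C ≤ ∠ B A C → ∠ B C A ≤ ∠ B A C →
      widthB (convexHull ℝ {A, B, C}) =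
        Metric.infDist A (affineSpan ℝ {B, C} : Set (EuclideanSpace ℝ (Fin 2)))) := by
  let b : AffineBasis (Fin 3) ℝ (EuclideanSpace ℝ (Fin 2)) :=
    ⟨![A, B, C], hnd, hnd.affineSpan_eq_top_iff_card_eq_finrank_add_one.2 (by simp)⟩
  have vertices : Set.range b = {A, B, C} := by
    change Set.range ![A, B, C] = _
    rw [Matrix.range_cons, Matrix.range_cons_cons_empty, Set.singleton_union]
  have opposite_side : b '' {0}ᶜ = {B, C} := by
    rw [show ({0}ᶜ : Set (Fin 3)) = {1, 2} by ext i; fin_cases i <;> simp, Set.image_pair]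
    rfl
  rw [← vertices, ← opposite_side]
  refine ⟨sqrt_three_mul_widthB_le_xiB b, fun hB hC => ?_⟩
  have norm_one_le : ‖coordGradient b 1‖ ≤ ‖coordGradient b 0‖ :=
    norm_coordGradient_le_of_angle_le b (k := 2) (by decide) (by decide) (by decide)
      (by rwa [angle_comm, angle_comm (b 2)])
  have norm_two_le : ‖coordGradient b 2‖ ≤ ‖coordGradient b 0‖ :=
    norm_coordGradient_le_of_angle_le b (k := 1) (by decide) (by decide) (by decide) hC
  rw [widthB_convexHull_eq_inv_norm_coordGradient b
    (Fin.forall_fin_succ.2 ⟨le_rfl, Fin.forall_fin_two.2 ⟨norm_one_le, norm_two_le⟩⟩)]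
  exact (infDist_affineSpan_image_compl b 0).symm
end

section
/- Let K ⊂ ℝ² be a convex body of constant width w (every pair of parallel supporting lines of K is at distance w). Then the shortest closed billiard trajectory in K is 2-periodic; in particular ξ_B(K) = 2w, and no closed polygonal line with three vertices that cannot be translated into the interior of K has Euclidean length less than 2w. -/
open scoped RealInnerProductSpace Pointwise
open MeasureTheory

/-! By Hahn–Banach in `K × K × K`, a triangle `q` that cannot be translated into the interior of
`K` comes with vectors `v₁ + v₂ + v₃ = 0`, not all zero, such that `∑ ⟪vᵢ, kᵢ⟫ ≤ ∑ ⟪vᵢ, qᵢ⟫` for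
all `kᵢ ∈ K`. These vectors are the sides of a triangle `ABC`. Summing by parts around the centre
`O` of a ball of radius `ρ` containing `ABC` bounds the right-hand side by `ρ` times the perimeter
of `q`. On the left, let `kᵢ` be extreme in the direction `vᵢ` and compare it with the opposite
extreme point. Points of `K` are at most `w` apart, so summing by parts around any point `H` gives
at least `w (AB + BC + CA - HA - HB - HC)`. Hence the perimeter of `q` is at least `2w` once
`2ρ + HA + HB + HC ≤ AB + BC + CA`. If `ABC` is not acute, take for `O` the midpoint of the longest
side and for `H` the opposite vertex, with equality. If `ABC` is acute, take the circumcentre and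
the orthocentre; the inequality becomes `1 + ∑ cos ≤ ∑ sin` over the angles, which holds because
`(∑ sin)² = (1 + ∑ cos)² + 4 ∏ cos`.

In the plane, Helly's theorem extracts from any non-translatable polygon three vertices that are
already non-translatable, and their triangle is no longer than the polygon. A segment of length
`w`, traversed back and forth, attains the bound `2w`. -/

section TriangleGeometry

open scoped EuclideanGeometry Real
open EuclideanGeometry

theorem one_add_sum_cos_le_sum_sin {α β γ : ℝ} (hsum : α + β + γ = π)
    (hα : α ∈ Set.Icc 0 (π / 2)) (hβ : β ∈ Set.Icc 0 (π / 2))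
    (hγ : γ ∈ Set.Icc 0 (π / 2)) :
    1 + Real.cos α + Real.cos β + Real.cos γ ≤ Real.sin α + Real.sin β + Real.sin γ := by
  have cos_nonneg : ∀ {θ : ℝ}, θ ∈ Set.Icc 0 (π / 2) → 0 ≤ Real.cos θ := fun h =>
    Real.cos_nonneg_of_mem_Icc ⟨by linarith [h.1, Real.pi_pos], h.2⟩
  have sin_nonneg : ∀ {θ : ℝ}, θ ∈ Set.Icc 0 (π / 2) → 0 ≤ Real.sin θ := fun h =>
    Real.sin_nonneg_of_nonneg_of_le_pi h.1 (by linarith [h.2, Real.pi_pos])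
  have hcosα := cos_nonneg hα
  have hcosβ := cos_nonneg hβ
  have hcosγ := cos_nonneg hγ
  have hsinα := sin_nonneg hα
  have hsinβ := sin_nonneg hβ
  have hsinγ := sin_nonneg hγ
  have sq_sum_sin : (Real.sin α + Real.sin β + Real.sin γ) ^ 2 =
      (1 + Real.cos α + Real.cos β + Real.cos γ) ^ 2 +
        4 * (Real.cos α * Real.cos β * Real.cos γ) := by
    obtain rfl : γ = π - (α + β) := by linarith
    rw [Real.sin_pi_sub, Real.cos_pi_sub, Real.sin_add, Real.cos_add]
    linear_combination
      ((1 + Real.cos β) ^ 2 - Real.sin β ^ 2) * Real.sin_sq_add_cos_sq α +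
        2 * Real.cos α * (1 + Real.cos α) * Real.sin_sq_add_cos_sq β
  have hcos : 0 ≤ Real.cos α * Real.cos β * Real.cos γ := by positivity
  exact le_of_sq_le_sq (by linarith) (by positivity)

variable {V P : Type*} [NormedAddCommGroup V] [InnerProductSpace ℝ V] [MetricSpace P]
  [NormedAddTorsor V P]

theorem dist_midpoint_le_of_pi_div_two_le_angle {A B C : P} (h : π / 2 ≤ ∠ B A C) :
    dist (midpoint ℝ B C) A ≤ dist B C / 2 := by
  have hcos : Real.cos (∠ B A C) ≤ 0 :=
    Real.cos_nonpos_of_pi_div_two_le_of_le h (by linarith [angle_le_pi B A C, Real.pi_pos])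
  have hsq : dist A B ^ 2 + dist A C ^ 2 ≤ dist B C ^ 2 := by
    rw [dist_comm A, dist_comm A]
    linarith [law_cos B A C, mul_nonpos_of_nonneg_of_nonpos
      (mul_nonneg (dist_nonneg (x := B) (y := A)) (dist_nonneg (x := C) (y := A))) hcos]
  have apollonius := dist_sq_add_dist_sq_eq_two_mul_dist_midpoint_sq_add_half_dist_sq A B C
  rw [dist_comm _ A]
  exact le_of_sq_le_sq (by linarith) (by positivity)

theorem norm_add_eq_two_mul_mul_abs_cos {x y : V} {R θ : ℝ} (hx : ‖x‖ = R) (hy : ‖y‖ = R)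
    (hsub : ‖x - y‖ = 2 * R * Real.sin θ) : ‖x + y‖ = 2 * R * |Real.cos θ| := by
  have hR : 0 ≤ R := hx ▸ norm_nonneg x
  rw [← sq_eq_sq₀ (norm_nonneg _) (by positivity), mul_pow _ |_|, sq_abs]
  have parallelogram := parallelogram_law_with_norm ℝ x y
  rw [hx, hy, hsub] at parallelogram
  linear_combination parallelogram - 4 * R ^ 2 * Real.sin_sq_add_cos_sq θ

theorem dist_eq_two_mul_circumradius_mul_sin_angle (t : Affine.Triangle ℝ P) {i j k : Fin 3}
    (hij : i ≠ j) (hik : i ≠ k) (hjk : j ≠ k) :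
    dist (t.points i) (t.points k) =
      2 * t.circumradius * Real.sin (∠ (t.points i) (t.points j) (t.points k)) := by
  have hsin := sin_ne_zero_of_not_collinear
    (affineIndependent_iff_not_collinear_of_ne hij hik hjk |>.mp t.independent)
  rw [← t.dist_div_sin_angle_eq_two_mul_circumradius hij hik hjk, div_mul_cancel₀ _ hsin]

theorem dist_orthocenter_eq_two_mul_circumradius_mul_abs_cos_angle (t : Affine.Triangle ℝ P)
    {i j k : Fin 3} (hij : i ≠ j) (hik : i ≠ k) (hjk : j ≠ k) :
    dist t.orthocenter (t.points j) =
      2 * t.circumradius * |Real.cos (∠ (t.points i) (t.points j) (t.points k))| := by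
  have huniv : (Finset.univ : Finset (Fin 3)) = {i, j, k} := by decide +revert
  have hsylvester : t.orthocenter -ᵥ t.points j =
      (t.points i -ᵥ t.circumcenter) + (t.points k -ᵥ t.circumcenter) := by
    rw [← vsub_sub_vsub_cancel_right _ _ t.circumcenter,
      t.orthocenter_vsub_circumcenter_eq_sum_vsub, huniv, Finset.sum_insert (by simp [*]),
      Finset.sum_pair hjk]
    abel
  have hnorm (l : Fin 3) : ‖t.points l -ᵥ t.circumcenter‖ = t.circumradius := by
    rw [← dist_eq_norm_vsub, t.dist_circumcenter_eq_circumradius]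
  rw [dist_eq_norm_vsub V, hsylvester]
  refine norm_add_eq_two_mul_mul_abs_cos (hnorm i) (hnorm k) ?_
  rw [vsub_sub_vsub_cancel_right, ← dist_eq_norm_vsub,
    dist_eq_two_mul_circumradius_mul_sin_angle t hij hik hjk]

theorem two_mul_circumradius_add_sum_dist_orthocenter_le {t : Affine.Triangle ℝ P}
    (ht : t.AcuteAngled) :
    2 * t.circumradius + (dist t.orthocenter (t.points 0) + dist t.orthocenter (t.points 1) +
        dist t.orthocenter (t.points 2)) ≤
      dist (t.points 0) (t.points 1) + dist (t.points 1) (t.points 2) +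
        dist (t.points 2) (t.points 0) := by
  let angle (i j k : Fin 3) : ℝ := ∠ (t.points i) (t.points j) (t.points k)
  have angle_mem {i j k : Fin 3} (hij : i ≠ j) (hik : i ≠ k) (hjk : j ≠ k) :
      angle i j k ∈ Set.Icc 0 (π / 2) :=
    ⟨angle_nonneg _ _ _, (ht i j k hij hik hjk).le⟩
  have dist_orthocenter {i j k : Fin 3} (hij : i ≠ j) (hik : i ≠ k) (hjk : j ≠ k) :
      dist t.orthocenter (t.points j) = 2 * t.circumradius * Real.cos (angle i j k) := by
    have hcos : 0 ≤ Real.cos (angle i j k) := Real.cos_nonneg_of_neg_pi_div_two_le_of_le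
      (by linarith [(angle_mem hij hik hjk).1, Real.pi_pos]) (angle_mem hij hik hjk).2
    rw [dist_orthocenter_eq_two_mul_circumradius_mul_abs_cos_angle t hij hik hjk,
      abs_of_nonneg hcos]
  have hsum : angle 0 1 2 + angle 1 2 0 + angle 2 0 1 = π :=
    angle_add_angle_add_angle_eq_pi _ (t.independent.injective.ne (by decide))
  have htrig := one_add_sum_cos_le_sum_sin hsum (angle_mem (by decide) (by decide) (by decide))
    (angle_mem (by decide) (by decide) (by decide)) (angle_mem (by decide) (by decide) (by decide))
  rw [dist_orthocenter (i := 2) (j := 0) (k := 1) (by decide) (by decide) (by decide),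
    dist_orthocenter (i := 0) (j := 1) (k := 2) (by decide) (by decide) (by decide),
    dist_orthocenter (i := 1) (j := 2) (k := 0) (by decide) (by decide) (by decide),
    dist_comm (t.points 0) (t.points 1), dist_comm (t.points 1) (t.points 2),
    dist_comm (t.points 2) (t.points 0),
    dist_eq_two_mul_circumradius_mul_sin_angle t (j := 2) (by decide) (by decide) (by decide),
    dist_eq_two_mul_circumradius_mul_sin_angle t (j := 0) (by decide) (by decide) (by decide),
    dist_eq_two_mul_circumradius_mul_sin_angle t (j := 1) (by decide) (by decide) (by decide)]
  linear_combination mul_le_mul_of_nonneg_left htrig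
    (mul_nonneg zero_le_two t.circumradius_nonneg)

theorem affineIndependent_of_angle_lt_pi_div_two {A B C : P} (hA : ∠ C A B < π / 2)
    (hB : ∠ A B C < π / 2) (hC : ∠ B C A < π / 2) :
    AffineIndependent ℝ ![A, B, C] := by
  have ne_of_angle_lt {x y z : P} (h : ∠ x y z < π / 2) : x ≠ y ∧ z ≠ y := by
    constructor <;> rintro rfl <;> simp at h
  obtain ⟨hAB, hCB⟩ := ne_of_angle_lt hB
  have hsum := angle_add_angle_add_angle_eq_pi C hAB.symm
  rw [affineIndependent_iff_not_collinear_set,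
    collinear_iff_eq_or_eq_or_angle_eq_zero_or_angle_eq_pi]
  rintro (h | h | h | h)
  · exact hAB h
  · exact hCB h
  · linarith
  · linarith [Real.pi_pos]

theorem exists_two_mul_radius_add_sum_dist_le_of_obtuse {A B C : V}
    (hA : π / 2 ≤ ∠ C A B) : ∃ (O H : V) (ρ : ℝ),
      dist O A ≤ ρ ∧ dist O B ≤ ρ ∧ dist O C ≤ ρ ∧
      2 * ρ + (dist H A + dist H B + dist H C) ≤ dist A B + dist B C + dist C A := by
  refine ⟨midpoint ℝ B C, A, dist B C / 2,
    dist_midpoint_le_of_pi_div_two_le_angle (angle_comm C A B ▸ hA), ?_, ?_, ?_⟩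
  · rw [dist_midpoint_left, Real.norm_two, inv_mul_eq_div]
  · rw [dist_midpoint_right, Real.norm_two, inv_mul_eq_div]
  · rw [dist_self, dist_comm C A]
    exact le_of_eq (by ring)

theorem exists_two_mul_radius_add_sum_dist_le (A B C : V) : ∃ (O H : V) (ρ : ℝ),
    dist O A ≤ ρ ∧ dist O B ≤ ρ ∧ dist O C ≤ ρ ∧
      2 * ρ + (dist H A + dist H B + dist H C) ≤ dist A B + dist B C + dist C A := by
  rcases le_or_gt (π / 2) (∠ C A B) with hA | hA
  · exact exists_two_mul_radius_add_sum_dist_le_of_obtuse hA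
  rcases le_or_gt (π / 2) (∠ A B C) with hB | hB
  · obtain ⟨O, H, ρ, hOB, hOC, hOA, h⟩ := exists_two_mul_radius_add_sum_dist_le_of_obtuse hB
    exact ⟨O, H, ρ, hOA, hOB, hOC, by linarith⟩
  rcases le_or_gt (π / 2) (∠ B C A) with hC | hC
  · obtain ⟨O, H, ρ, hOC, hOA, hOB, h⟩ := exists_two_mul_radius_add_sum_dist_le_of_obtuse hC
    exact ⟨O, H, ρ, hOA, hOB, hOC, by linarith⟩
  let t : Affine.Triangle ℝ V := ⟨![A, B, C], affineIndependent_of_angle_lt_pi_div_two hA hB hC⟩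
  have ht : t.AcuteAngled := Affine.Triangle.acuteAngled_iff_angle_lt.mpr ⟨hB, hC, hA⟩
  exact ⟨t.circumcenter, t.orthocenter, t.circumradius,
    (t.dist_circumcenter_eq_circumradius' 0).le, (t.dist_circumcenter_eq_circumradius' 1).le,
    (t.dist_circumcenter_eq_circumradius' 2).le,
    two_mul_circumradius_add_sum_dist_orthocenter_le ht⟩

end TriangleGeometry

section ConstantWidth

variable {E : Type*} [NormedAddCommGroup E] [InnerProductSpace ℝ E]

theorem sum_inner_side_le (O A B C x y z : E) :
    ⟪C - B, x⟫ + ⟪A - C, y⟫ + ⟪B - A, z⟫ ≤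
      dist O A * dist y z + dist O B * dist z x + dist O C * dist x y := by
  have inner_le (X u v : E) : ⟪X - O, u - v⟫ ≤ dist O X * dist u v := by
    rw [dist_eq_norm', dist_eq_norm]
    exact real_inner_le_norm _ _
  calc
    _ = ⟪A - O, y - z⟫ + ⟪B - O, z - x⟫ + ⟪C - O, x - y⟫ := by
      simp only [inner_sub_left, inner_sub_right]
      ring
    _ ≤ _ := add_le_add (add_le_add (inner_le A y z) (inner_le B z x)) (inner_le C x y)

/-- All pairs of parallel supporting hyperplanes of `K` are at distance `w`. The breadth of `K` in
the direction `p` is the difference of the extreme values of `⟪p, ·⟫` on `K`; these are actual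
extrema when `K` is compact and nonempty. -/
def HasConstantWidth (K : Set E) (w : ℝ) : Prop :=
  ∀ p : E, ‖p‖ = 1 → sSup ((fun q => ⟪p, q⟫) '' K) - sInf ((fun q => ⟪p, q⟫) '' K) = w

namespace HasConstantWidth

variable {K : Set E} {w : ℝ}

theorem sSup_sub_sInf_eq (hw : HasConstantWidth K w) (v : E) :
    sSup ((fun q => ⟪v, q⟫) '' K) - sInf ((fun q => ⟪v, q⟫) '' K) = w * ‖v‖ := by
  obtain rfl | hv := eq_or_ne v 0
  · obtain rfl | hne := K.eq_empty_or_nonempty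
    · simp
    · simp [hne.image_const]
  have hunit : ‖‖v‖⁻¹ • v‖ = 1 := norm_smul_inv_norm (𝕜 := ℝ) hv
  have hscale : (fun q => ⟪v, q⟫) '' K = ‖v‖ • ((fun q => ⟪‖v‖⁻¹ • v, q⟫) '' K) := by
    rw [← Set.image_smul, Set.image_image]
    refine Set.image_congr fun q _ => ?_
    rw [real_inner_smul_left, smul_eq_mul, mul_inv_cancel_left₀ (norm_ne_zero_iff.mpr hv)]
  rw [hscale, Real.sSup_smul_of_nonneg (norm_nonneg v), Real.sInf_smul_of_nonneg (norm_nonneg v),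
    ← smul_sub, hw _ hunit, smul_eq_mul, mul_comm]

theorem exists_inner_sub_eq (hw : HasConstantWidth K w) (hK : IsCompact K) (hne : K.Nonempty)
    (v : E) : ∃ x ∈ K, ∃ y ∈ K, ⟪v, x⟫ - ⟪v, y⟫ = w * ‖v‖ := by
  have hcont : ContinuousOn (fun q => ⟪v, q⟫) K := by fun_prop
  obtain ⟨x, hx, hsup⟩ := hK.exists_sSup_image_eq hne hcont
  obtain ⟨y, hy, hinf⟩ := hK.exists_sInf_image_eq hne hcont
  exact ⟨x, hx, y, hy, by rw [← hw.sSup_sub_sInf_eq v, hsup, hinf]⟩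

theorem inner_sub_le (hw : HasConstantWidth K w) (hK : IsCompact K) (v : E) {x y : E}
    (hx : x ∈ K) (hy : y ∈ K) : ⟪v, x - y⟫ ≤ w * ‖v‖ := by
  have himage : IsCompact ((fun q => ⟪v, q⟫) '' K) := hK.image (by fun_prop)
  rw [inner_sub_right, ← hw.sSup_sub_sInf_eq v]
  exact sub_le_sub (le_csSup himage.bddAbove ⟨x, hx, rfl⟩) (csInf_le himage.bddBelow ⟨y, hy, rfl⟩)

variable [Nontrivial E]

theorem nonneg (hw : HasConstantWidth K w) (hK : IsCompact K) : 0 ≤ w := by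
  obtain ⟨p, hp⟩ := exists_norm_eq E zero_le_one
  obtain rfl | ⟨x, hx⟩ := K.eq_empty_or_nonempty
  · simpa using (hw p hp).le
  · simpa [hp] using hw.inner_sub_le hK p hx hx

theorem dist_le (hw : HasConstantWidth K w) (hK : IsCompact K) {x y : E} (hx : x ∈ K)
    (hy : y ∈ K) : dist x y ≤ w := by
  obtain rfl | hxy := eq_or_ne x y
  · simpa using hw.nonneg hK
  · have h := hw.inner_sub_le hK (x - y) hx hy
    rw [real_inner_self_eq_norm_mul_norm, ← dist_eq_norm] at h
    exact le_of_mul_le_mul_right h (dist_pos.mpr hxy)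

theorem dist_lt_of_mem_interior (hw : HasConstantWidth K w) (hK : IsCompact K) {x y : E}
    (hx : x ∈ interior K) (hy : y ∈ K) : dist x y < w := by
  have hball : K ⊆ Metric.closedBall y w := fun z hz => hw.dist_le hK hz hy
  have hmem := interior_mono hball hx
  rwa [interior_closedBall', Metric.mem_ball] at hmem

theorem exists_add_notMem_interior (hw : HasConstantWidth K w) (hK : IsCompact K) {v : E}
    (hv : ‖v‖ = w) (t : E) : t ∉ interior K ∨ v + t ∉ interior K := by
  by_contra! h
  have hlt := hw.dist_lt_of_mem_interior hK h.2 (interior_subset h.1)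
  rw [dist_eq_norm, add_sub_cancel_right, hv] at hlt
  exact lt_irrefl w hlt

theorem exists_mul_le_sum_inner_side (hw : HasConstantWidth K w) (hK : IsCompact K)
    (hne : K.Nonempty) (H A B C : E) : ∃ x ∈ K, ∃ y ∈ K, ∃ z ∈ K,
      w * (dist A B + dist B C + dist C A - (dist H A + dist H B + dist H C)) ≤
        ⟪C - B, x⟫ + ⟪A - C, y⟫ + ⟪B - A, z⟫ := by
  obtain ⟨x, hx, x', hx', hxx'⟩ := hw.exists_inner_sub_eq hK hne (C - B)
  obtain ⟨y, hy, y', hy', hyy'⟩ := hw.exists_inner_sub_eq hK hne (A - C)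
  obtain ⟨z, hz, z', hz', hzz'⟩ := hw.exists_inner_sub_eq hK hne (B - A)
  rw [← dist_eq_norm'] at hxx' hyy' hzz'
  have hopposite : -(⟪C - B, x'⟫ + ⟪A - C, y'⟫ + ⟪B - A, z'⟫) ≤
      w * (dist H A + dist H B + dist H C) := by
    calc
      _ = ⟪C - B, -x'⟫ + ⟪A - C, -y'⟫ + ⟪B - A, -z'⟫ := by
        simp only [inner_neg_right]
        ring
      _ ≤ dist H A * dist y' z' + dist H B * dist z' x' + dist H C * dist x' y' := by
        simpa only [dist_neg_neg] using sum_inner_side_le H A B C (-x') (-y') (-z')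
      _ ≤ dist H A * w + dist H B * w + dist H C * w := by
        gcongr
        exacts [hw.dist_le hK hy' hz', hw.dist_le hK hz' hx', hw.dist_le hK hx' hy']
      _ = w * (dist H A + dist H B + dist H C) := by ring
  exact ⟨x, hx, y, hy, z, hz, by linarith⟩

end HasConstantWidth

theorem eq_zero_of_forall_le_inner {s : E} {c : ℝ} (h : ∀ t, c ≤ ⟪s, t⟫) : s = 0 := by
  by_contra hs
  have hpos : 0 < ⟪s, s⟫ := real_inner_self_pos.mpr hs
  have hlt := h (((c - 1) / ⟪s, s⟫) • s)
  rw [real_inner_smul_right, div_mul_cancel₀ _ hpos.ne'] at hlt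
  linarith

variable [CompleteSpace E]

theorem exists_forall_eq_sum_inner {ι : Type*} [Fintype ι] (f : (ι → E) →L[ℝ] ℝ) :
    ∃ v : ι → E, ∀ x, f x = ∑ i, ⟪v i, x i⟫ := by
  classical
  refine ⟨fun i => (InnerProductSpace.toDual ℝ E).symm
    (f.comp (ContinuousLinearMap.single ℝ (fun _ => E) i)), fun x => ?_⟩
  simp only [InnerProductSpace.toDual_symm_apply]
  exact (ContinuousLinearMap.sum_comp_single (R := ℝ) _ f x).symm

theorem exists_normals_of_forall_exists_notMem_interior {ι : Type*} [Fintype ι] {K : Set E}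
    (hK : Convex ℝ K) (hne : (interior K).Nonempty) {q : ι → E}
    (hq : ∀ t, ∃ i, q i + t ∉ interior K) :
    ∃ v : ι → E, v ≠ 0 ∧ ∑ i, v i = 0 ∧
      ∀ k : ι → E, (∀ i, k i ∈ K) → ∑ i, ⟪v i, k i⟫ ≤ ∑ i, ⟪v i, q i⟫ := by
  let T : Set (ι → E) := Set.range fun t i => q i + t
  have hT : Convex ℝ T := by
    rintro _ ⟨s, rfl⟩ _ ⟨t, rfl⟩ a b _ _ hab
    refine ⟨a • s + b • t, funext fun i => ?_⟩
    obtain rfl : a = 1 - b := eq_sub_of_add_eq hab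
    simp only [Pi.add_apply, Pi.smul_apply]
    module
  have hinterior : interior (Set.univ.pi fun _ : ι => K) = Set.univ.pi fun _ => interior K :=
    interior_pi_set Set.finite_univ
  have hdisj : Disjoint (interior (Set.univ.pi fun _ : ι => K)) T := by
    rw [hinterior, Set.disjoint_right]
    rintro _ ⟨t, rfl⟩ hmem
    obtain ⟨i, hi⟩ := hq t
    exact hi (hmem i trivial)
  obtain ⟨f, u, hf, hfK, hfT⟩ := geometric_hahn_banach_of_nonempty_interior
    (convex_pi fun _ _ => hK) hT hdisj
    (hinterior ▸ Set.univ_pi_nonempty_iff.mpr fun _ => hne) (Set.range_nonempty _)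
  obtain ⟨v, hv⟩ := exists_forall_eq_sum_inner f
  have hu (t : E) : u ≤ ∑ i, ⟪v i, q i⟫ + ⟪∑ i, v i, t⟫ := by
    simpa only [hv, inner_add_right, Finset.sum_add_distrib, sum_inner] using hfT _ ⟨t, rfl⟩
  refine ⟨v, ?_, ?_, fun k hk => ?_⟩
  · rintro rfl
    exact hf (ContinuousLinearMap.ext fun x => by simp [hv])
  · exact eq_zero_of_forall_le_inner fun t => sub_le_iff_le_add'.mpr (hu t)
  · rw [← hv]
    exact (hfK k fun i _ => hk i).trans (by simpa using hu 0)

theorem exists_triangle_of_forall_exists_notMem_interior {K : Set E} (hK : Convex ℝ K)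
    (hne : (interior K).Nonempty) {q : Fin 3 → E} (hq : ∀ t, ∃ i, q i + t ∉ interior K) :
    ∃ A B C : E, ¬(A = B ∧ B = C) ∧ ∀ x ∈ K, ∀ y ∈ K, ∀ z ∈ K,
      ⟪C - B, x⟫ + ⟪A - C, y⟫ + ⟪B - A, z⟫ ≤
        ⟪C - B, q 0⟫ + ⟪A - C, q 1⟫ + ⟪B - A, q 2⟫ := by
  obtain ⟨v, hv, hsum, hle⟩ := exists_normals_of_forall_exists_notMem_interior hK hne hq
  rw [Fin.sum_univ_three] at hsum
  have hv₀ : -v 1 - v 2 = v 0 := by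
    rw [← sub_eq_zero, ← neg_eq_zero, ← hsum]
    abel
  refine ⟨0, v 2, -v 1, ?_, fun x hx y hy z hz => ?_⟩
  · rintro ⟨h₂, h₁⟩
    have hv₁ : v 1 = 0 := by rw [← neg_eq_zero, ← h₁, ← h₂]
    refine hv (funext (Fin.forall_fin_succ.mpr ⟨?_, Fin.forall_fin_two.mpr ⟨hv₁, h₂.symm⟩⟩))
    rw [← hv₀, hv₁, ← h₂, neg_zero, sub_zero, Pi.zero_apply]
  · simpa [Fin.sum_univ_three, hv₀] using
      hle ![x, y, z] (by simp [Fin.forall_fin_succ, hx, hy, hz])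

variable [Nontrivial E]

theorem HasConstantWidth.two_mul_width_le_perimeter {K : Set E} {w : ℝ}
    (hw : HasConstantWidth K w) (hK : IsCompact K) (hconv : Convex ℝ K)
    (hne : (interior K).Nonempty) {q : Fin 3 → E} (hq : ∀ t, ∃ i, q i + t ∉ interior K) :
    2 * w ≤ dist (q 0) (q 1) + dist (q 1) (q 2) + dist (q 2) (q 0) := by
  obtain ⟨A, B, C, hABC, hsep⟩ := exists_triangle_of_forall_exists_notMem_interior hconv hne hq
  obtain ⟨O, H, ρ, hA, hB, hC, hρ⟩ := exists_two_mul_radius_add_sum_dist_le A B C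
  obtain ⟨x, hx, y, hy, z, hz, hxyz⟩ :=
    hw.exists_mul_le_sum_inner_side hK (hne.mono interior_subset) H A B C
  have hρ_pos : 0 < ρ := by
    by_contra! hρ₀
    have eq_of_dist_le {X : E} (hX : dist O X ≤ ρ) : O = X := dist_le_zero.mp (hX.trans hρ₀)
    exact hABC ⟨(eq_of_dist_le hA).symm.trans (eq_of_dist_le hB),
      (eq_of_dist_le hB).symm.trans (eq_of_dist_le hC)⟩
  refine le_of_mul_le_mul_right ?_ hρ_pos
  calc 2 * w * ρ = w * (2 * ρ) := by ring
    _ ≤ w * (dist A B + dist B C + dist C A - (dist H A + dist H B + dist H C)) :=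
      mul_le_mul_of_nonneg_left (le_sub_iff_add_le.mpr hρ) (hw.nonneg hK)
    _ ≤ ⟪C - B, x⟫ + ⟪A - C, y⟫ + ⟪B - A, z⟫ := hxyz
    _ ≤ ⟪C - B, q 0⟫ + ⟪A - C, q 1⟫ + ⟪B - A, q 2⟫ := hsep x hx y hy z hz
    _ ≤ dist O A * dist (q 1) (q 2) + dist O B * dist (q 2) (q 0) + dist O C * dist (q 0) (q 1) :=
      sum_inner_side_le O A B C _ _ _
    _ ≤ ρ * dist (q 1) (q 2) + ρ * dist (q 2) (q 0) + ρ * dist (q 0) (q 1) := by gcongr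
    _ = (dist (q 0) (q 1) + dist (q 1) (q 2) + dist (q 2) (q 0)) * ρ := by ring

end ConstantWidth

section Polygons

theorem exists_orderEmbedding_forall_exists_add_notMem {ι E : Type*} [LinearOrder ι]
    [AddCommGroup E] [Module ℝ E] [FiniteDimensional ℝ E] {U : Set E} (hU : Convex ℝ U)
    {s : Finset ι} {k : ℕ} (hk : Module.finrank ℝ E + 1 ≤ k) (hks : k ≤ s.card) {q : ι → E}
    (hq : ∀ t, ∃ i ∈ s, q i + t ∉ U) :
    ∃ o : Fin k ↪o ι, (∀ j, o j ∈ s) ∧ ∀ t, ∃ j, q (o j) + t ∉ U := by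
  by_contra! h
  obtain ⟨t, ht⟩ : (⋂ i ∈ s, (fun t => q i + t) ⁻¹' U).Nonempty := by
    refine Convex.helly_theorem' (𝕜 := ℝ) (fun i _ => hU.translate_preimage_right (q i))
      fun I hIs hI => ?_
    obtain ⟨J, hIJ, hJs, hJ⟩ := Finset.exists_subsuperset_card_eq hIs (hI.trans hk) hks
    obtain ⟨t, ht⟩ := h (J.orderEmbOfFin hJ) fun j => hJs (J.orderEmbOfFin_mem hJ j)
    refine ⟨t, Set.mem_iInter₂.mpr fun i hi => ?_⟩
    obtain ⟨j, rfl⟩ : i ∈ Set.range (J.orderEmbOfFin hJ) := by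
      rw [J.range_orderEmbOfFin hJ]
      exact hIJ hi
    exact ht j
  obtain ⟨i, hi, hit⟩ := hq t
  exact hit (Set.mem_iInter₂.mp ht i hi)

theorem dist_add_dist_add_dist_le_sum_dist {α : Type*} [PseudoMetricSpace α] {f : ℕ → α}
    {i j k m : ℕ} (hij : i ≤ j) (hjk : j ≤ k) (hkm : k ≤ m) (hf : f m = f 0) :
    dist (f i) (f j) + dist (f j) (f k) + dist (f k) (f i) ≤
      ∑ l ∈ Finset.range m, dist (f l) (f (l + 1)) := by
  have hki : dist (f k) (f i) ≤ dist (f k) (f m) + dist (f 0) (f i) :=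
    hf ▸ dist_triangle _ _ _
  rw [Finset.range_eq_Ico, ← Finset.sum_Ico_consecutive _ (Nat.zero_le k) hkm,
    ← Finset.sum_Ico_consecutive _ (Nat.zero_le j) hjk,
    ← Finset.sum_Ico_consecutive _ (Nat.zero_le i) hij]
  linarith [dist_le_Ico_sum_dist f (Nat.zero_le i), dist_le_Ico_sum_dist f hij,
    dist_le_Ico_sum_dist f hjk, dist_le_Ico_sum_dist f hkm]

theorem HasConstantWidth.two_mul_width_le_sum_norm {E : Type*} [NormedAddCommGroup E]
    [InnerProductSpace ℝ E] [FiniteDimensional ℝ E] [Nontrivial E]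
    (hdim : Module.finrank ℝ E ≤ 2) {K : Set E} {w : ℝ} (hw : HasConstantWidth K w)
    (hK : IsCompact K) (hconv : Convex ℝ K) (hne : (interior K).Nonempty) {m : ℕ} (hm : 2 ≤ m)
    {q : ℕ → E} (hq : ∀ t, ∃ i < m, q i + t ∉ interior K) :
    2 * w ≤ ∑ i ∈ Finset.range m, ‖q ((i + 1) % m) - q i‖ := by
  have := FiniteDimensional.complete ℝ E
  let f (i : ℕ) : E := q (i % m)
  have hf : ∀ i < m, f i = q i := fun i hi => congrArg q (Nat.mod_eq_of_lt hi)
  obtain ⟨o, hom, ho⟩ := exists_orderEmbedding_forall_exists_add_notMem hconv.interior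
    (s := Finset.range (m + 1)) (k := 3) (q := f) (by lia) (by simpa using hm) fun t => by
      obtain ⟨i, hi, hit⟩ := hq t
      exact ⟨i, by grind, by rwa [hf i hi]⟩
  calc 2 * w
      ≤ dist (f (o 0)) (f (o 1)) + dist (f (o 1)) (f (o 2)) + dist (f (o 2)) (f (o 0)) :=
        hw.two_mul_width_le_perimeter hK hconv hne (q := f ∘ o) ho
    _ ≤ ∑ i ∈ Finset.range m, dist (f i) (f (i + 1)) :=
        dist_add_dist_add_dist_le_sum_dist (o.monotone (by decide)) (o.monotone (by decide))
          (Finset.mem_range_succ_iff.mp (hom 2)) (by simp [f])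
    _ = ∑ i ∈ Finset.range m, ‖q ((i + 1) % m) - q i‖ :=
        Finset.sum_congr rfl fun i hi => by rw [dist_eq_norm', hf i (Finset.mem_range.mp hi)]

end Polygons

theorem xiB_le_sum_norm {n : ℕ} {K : Set (EuclideanSpace ℝ (Fin n))} {m : ℕ} (hm : 2 ≤ m)
    {q : ℕ → EuclideanSpace ℝ (Fin n)} (hq : NotTranslatableInto m q K) :
    xiB K ≤ ∑ i ∈ Finset.range m, ‖q ((i + 1) % m) - q i‖ := by
  refine csInf_le ⟨0, ?_⟩ ⟨m, hm, q, hq, rfl⟩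
  rintro _ ⟨m, -, q, -, rfl⟩
  positivity

namespace HasConstantWidth

variable {n : ℕ} [NeZero n] {K : Set (EuclideanSpace ℝ (Fin n))} {w : ℝ}

theorem exists_notTranslatableInto_two (hw : HasConstantWidth K w) (hK : IsCompact K) :
    ∃ q, NotTranslatableInto 2 q K ∧ ∑ i ∈ Finset.range 2, ‖q ((i + 1) % 2) - q i‖ = 2 * w := by
  obtain ⟨v, hv⟩ := exists_norm_eq (EuclideanSpace ℝ (Fin n)) (hw.nonneg hK)
  refine ⟨fun i => i • v, fun t => ?_, ?_⟩
  · rcases hw.exists_add_notMem_interior hK hv t with ht | ht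
    · exact ⟨0, zero_lt_two, by simpa using ht⟩
    · exact ⟨1, one_lt_two, by simpa using ht⟩
  · simp [Finset.sum_range_succ, hv, two_mul]

theorem xiB_eq_two_mul_width (hn : n ≤ 2) (hw : HasConstantWidth K w) (hK : IsConvexBody K) :
    xiB K = 2 * w := by
  obtain ⟨hcompact, hconv, hne⟩ := hK
  obtain ⟨q, hq, hlength⟩ := hw.exists_notTranslatableInto_two hcompact
  refine le_antisymm (hlength ▸ xiB_le_sum_norm le_rfl hq)
    (le_csInf ⟨_, 2, le_rfl, q, hq, rfl⟩ ?_)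
  rintro _ ⟨m, hm, q, hq, rfl⟩
  exact hw.two_mul_width_le_sum_norm (by simpa using hn) hcompact hconv hne hm hq

theorem two_mul_width_le_sum_norm_of_three (hw : HasConstantWidth K w) (hK : IsConvexBody K)
    {q : ℕ → EuclideanSpace ℝ (Fin n)} (hq : NotTranslatableInto 3 q K) :
    2 * w ≤ ∑ i ∈ Finset.range 3, ‖q ((i + 1) % 3) - q i‖ := by
  have h := hw.two_mul_width_le_perimeter hK.1 hK.2.1 hK.2.2 (q := fun i : Fin 3 => q i)
    fun t => Fin.exists_iff.mpr (by simpa using hq t)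
  simpa [Finset.sum_range_succ, dist_eq_norm'] using h

end HasConstantWidth

theorem constant_width_shortest_two_periodic_general {n : ℕ} [NeZero n]
    (K : Set (EuclideanSpace ℝ (Fin n))) (hK : IsConvexBody K) (w : ℝ)
    (hw : HasConstantWidth K w) :
    (n ≤ 2 → xiB K = 2 * w) ∧
    ∀ q : ℕ → EuclideanSpace ℝ (Fin n), NotTranslatableInto 3 q K →
      2 * w ≤ ∑ i ∈ Finset.range 3, ‖q ((i + 1) % 3) - q i‖ :=
  ⟨fun hn => hw.xiB_eq_two_mul_width hn hK, fun _ hq => hw.two_mul_width_le_sum_norm_of_three hK hq⟩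

/-- In a planar body of constant width `w`, the shortest closed billiard trajectory is
2-periodic: `ξ_B(K) = 2w`, and no closed polygonal line with three vertices that cannot
be translated into the interior of `K` has length less than `2w`. -/
theorem constant_width_shortest_two_periodic (K : Set (EuclideanSpace ℝ (Fin 2)))
    (hK : IsConvexBody K) (w : ℝ)
    (hw : ∀ p : EuclideanSpace ℝ (Fin 2), ‖p‖ = 1 →
      sSup ((fun q => ⟪p, q⟫) '' K) - sInf ((fun q => ⟪p, q⟫) '' K) = w) :
    xiB K = 2 * w ∧
    ∀ q : ℕ → EuclideanSpace ℝ (Fin 2), NotTranslatableInto 3 q K →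
      2 * w ≤ ∑ i ∈ Finset.range 3, ‖q ((i + 1) % 3) - q i‖ :=
  have h := constant_width_shortest_two_periodic_general K hK w hw
  ⟨h.1 le_rfl, h.2⟩
end
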